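/- arXiv:2509.24337 — 4 statements merged into one kernel-verified Lean document; each statement's English description precedes it below -/
import Mathlib

section
/- Suppose Q ∈ B(X₊, X₋) is a stabilizing solution of the Riccati equation (R1). Let δ₋, δ₊ ∈ B(U) be invertible operators with δ₋δ₊ = δ − γ₋Qβ₊, and set γ₊° := δ₋⁻¹(γ₊ − γ₋Qα₊), β₋° := (β₋ − α₋Qβ₊)δ₊⁻¹, V₋(z) := δ₋ + γ₋(zI − α₋)⁻¹β₋°, and V₊(z) := δ₊ + z·γ₊°(I − zα₊)⁻¹β₊. Then: (a) R(z) = V₋(z)V₊(z) for every z ∈ ℂ for which I − zα₊ and zI − α₋ are invertible (in particular for all z on the unit circle 𝕋); (b) for every z for which I − zα₊ and I − zα₊° are invertible, V₊(z) is invertible with V₊(z)⁻¹ = δ₊⁻¹ − z·δ₊⁻¹γ₊°(I − zα₊°)⁻¹β₊δ₊⁻¹; (c) for every z for which zI − α₋ and zI − α₋° are invertible, V₋(z) is invertible with V₋(z)⁻¹ = δ₋⁻¹ − δ₋⁻¹γ₋(zI − α₋°)⁻¹β₋°δ₋⁻¹. Consequently, R = V₋V₊ is a right canonical Wiener–Hopf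 factorization of R. -/
open Metric ContinuousLinearMap

noncomputable section

variable {U Xp Xm : Type*}
  [NormedAddCommGroup U] [InnerProductSpace ℂ U] [CompleteSpace U]
  [NormedAddCommGroup Xp] [InnerProductSpace ℂ Xp] [CompleteSpace Xp]
  [NormedAddCommGroup Xm] [InnerProductSpace ℂ Xm] [CompleteSpace Xm]

/-- The stable representation
`R(z) = δ + z·γ₊(I − zα₊)⁻¹β₊ + γ₋(zI − α₋)⁻¹β₋`. -/
def Rfun (δ : U →L[ℂ] U) (γp : Xp →L[ℂ] U) (αp : Xp →L[ℂ] Xp) (βp : U →L[ℂ] Xp)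
    (γm : Xm →L[ℂ] U) (αm : Xm →L[ℂ] Xm) (βm : U →L[ℂ] Xm) (z : ℂ) : U →L[ℂ] U :=
  δ + z • ((γp ∘L Ring.inverse (1 - z • αp)) ∘L βp) +
    (γm ∘L Ring.inverse (z • (1 : Xm →L[ℂ] Xm) - αm)) ∘L βm

/-- `Q` solves the Riccati equation (R1):
`δ − γ₋Qβ₊` is invertible and
`Q = α₋Qα₊ + (β₋ − α₋Qβ₊)(δ − γ₋Qβ₊)⁻¹(γ₊ − γ₋Qα₊)`. -/
def SolvesR1 (δ : U →L[ℂ] U) (γp : Xp →L[ℂ] U) (αp : Xp →L[ℂ] Xp) (βp : U →L[ℂ] Xp)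
    (γm : Xm →L[ℂ] U) (αm : Xm →L[ℂ] Xm) (βm : U →L[ℂ] Xm) (Q : Xp →L[ℂ] Xm) : Prop :=
  IsUnit (δ - (γm ∘L Q) ∘L βp) ∧
    Q = (αm ∘L Q) ∘L αp +
      ((βm - (αm ∘L Q) ∘L βp) ∘L Ring.inverse (δ - (γm ∘L Q) ∘L βp)) ∘L
        (γp - (γm ∘L Q) ∘L αp)

/-- The operator `α₊° := α₊ − β₊(δ − γ₋Qβ₊)⁻¹(γ₊ − γ₋Qα₊)`. -/
def alphaPcirc (δ : U →L[ℂ] U) (γp : Xp →L[ℂ] U) (αp : Xp →L[ℂ] Xp) (βp : U →L[ℂ] Xp)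
    (γm : Xm →L[ℂ] U) (Q : Xp →L[ℂ] Xm) : Xp →L[ℂ] Xp :=
  αp - (βp ∘L Ring.inverse (δ - (γm ∘L Q) ∘L βp)) ∘L (γp - (γm ∘L Q) ∘L αp)

/-- The operator `α₋° := α₋ − (β₋ − α₋Qβ₊)(δ − γ₋Qβ₊)⁻¹γ₋`. -/
def alphaMcirc (δ : U →L[ℂ] U) (βp : U →L[ℂ] Xp) (γm : Xm →L[ℂ] U) (αm : Xm →L[ℂ] Xm)
    (βm : U →L[ℂ] Xm) (Q : Xp →L[ℂ] Xm) : Xm →L[ℂ] Xm :=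
  αm - ((βm - (αm ∘L Q) ∘L βp) ∘L Ring.inverse (δ - (γm ∘L Q) ∘L βp)) ∘L γm

/-- A solution `Q` of (R1) is stabilizing if `α₊°` and `α₋°` have spectrum contained in
the open unit disc. -/
def StabilizingR1 (δ : U →L[ℂ] U) (γp : Xp →L[ℂ] U) (αp : Xp →L[ℂ] Xp) (βp : U →L[ℂ] Xp)
    (γm : Xm →L[ℂ] U) (αm : Xm →L[ℂ] Xm) (βm : U →L[ℂ] Xm) (Q : Xp →L[ℂ] Xm) : Prop :=
  spectrum ℂ (alphaPcirc δ γp αp βp γm Q) ⊆ ball (0 : ℂ) 1 ∧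
    spectrum ℂ (alphaMcirc δ βp γm αm βm Q) ⊆ ball (0 : ℂ) 1

/-- A `B(U)`-valued function of "plus type": analytic on an open neighborhood of the
closed unit disc, with invertible values and analytic pointwise inverse there. -/
def PlusFactor {E : Type*} [NormedAddCommGroup E] [InnerProductSpace ℂ E] [CompleteSpace E]
    (V : ℂ → (E →L[ℂ] E)) : Prop :=
  ∃ S : Set ℂ, IsOpen S ∧ closedBall (0 : ℂ) 1 ⊆ S ∧
    AnalyticOnNhd ℂ V S ∧ (∀ z ∈ S, IsUnit (V z)) ∧
    AnalyticOnNhd ℂ (fun z => Ring.inverse (V z)) S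

/-- A `B(U)`-valued function of "minus type" on the complement of the open unit disc:
`z ↦ V(1/z)` (with the value at `0` corresponding to `V(∞)`) extends to a function
that is analytic on an open neighborhood of the closed unit disc, with invertible
values and analytic pointwise inverse there. -/
def MinusFactor {E : Type*} [NormedAddCommGroup E] [InnerProductSpace ℂ E] [CompleteSpace E]
    (V : ℂ → (E →L[ℂ] E)) : Prop :=
  ∃ Vhat : ℂ → (E →L[ℂ] E), PlusFactor Vhat ∧ ∀ z : ℂ, 1 ≤ ‖z‖ → V z = Vhat z⁻¹

/-- A right canonical Wiener–Hopf factorization `R(z) = V₋(z)V₊(z)` on the unit circle. -/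
def RightCanonicalWH {E : Type*} [NormedAddCommGroup E] [InnerProductSpace ℂ E]
    [CompleteSpace E] (R : ℂ → (E →L[ℂ] E)) : Prop :=
  ∃ Vm Vp : ℂ → (E →L[ℂ] E), MinusFactor Vm ∧ PlusFactor Vp ∧
    ∀ z : ℂ, ‖z‖ = 1 → R z = Vm z * Vp z

/-- A left canonical Wiener–Hopf factorization `R(z) = W₊(z)W₋(z)` on the unit circle. -/
def LeftCanonicalWH {E : Type*} [NormedAddCommGroup E] [InnerProductSpace ℂ E]
    [CompleteSpace E] (R : ℂ → (E →L[ℂ] E)) : Prop :=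
  ∃ Wp Wm : ℂ → (E →L[ℂ] E), PlusFactor Wp ∧ MinusFactor Wm ∧
    ∀ z : ℂ, ‖z‖ = 1 → R z = Wp z * Wm z

/-!
The Riccati equation says that the operator matrix with rows `(δ - γₘQβₚ, γₚ - γₘQαₚ)` and
`(βₘ - αₘQβₚ, Q - αₘQαₚ)` is the product of the column `(δₘ, βₘ°)` and the row `(δₚ, γₚ°)`.
Multiplying out `Vₘ(z)Vₚ(z)`, the cross term contains `z(Q - αₘQαₚ) = (z - αₘ)Q + αₘQ(1 - zαₚ)`
between the two resolvents, each of which cancels one summand; the remaining terms in `Q` telescope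
and leave `R(z)`. By the Woodbury identity the pointwise inverse of each factor is a realization
whose state operator is `αₚ°` or `αₘ°`, so stability of all four state operators makes `Vₚ(z)`,
`Vₘ(1/z)` and their inverses analytic near the closed unit disc.
-/

open scoped Ring

section Algebra

variable {𝕜 E X : Type*} [Ring 𝕜]
  [AddCommGroup E] [Module 𝕜 E] [TopologicalSpace E]
  [AddCommGroup X] [Module 𝕜 X] [TopologicalSpace X] [IsTopologicalAddGroup X]

/-- The associate operator `a - b d⁻¹ c` of the quadruple `(d, c, a, b)`: the state operator of the
pointwise inverse of the realizations below. Meaningful only for invertible `d`. -/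
def associateOperator (d : E →L[𝕜] E) (c : X →L[𝕜] E) (a : X →L[𝕜] X) (b : E →L[𝕜] X) :
    X →L[𝕜] X :=
  a - (b ∘L d⁻¹ʳ) ∘L c

variable [IsTopologicalAddGroup E]

theorem add_comp_comp_mul_sub_eq_one {d d' : E →L[𝕜] E} {c : X →L[𝕜] E} {b : E →L[𝕜] X}
    {r s : X →L[𝕜] X} (hd : d * d' = 1) (hrs : r ∘L ((b ∘L d') ∘L c) ∘L s = r - s) :
    (d + (c ∘L r) ∘L b) * (d' - ((d' ∘L c) ∘L s) ∘L (b ∘L d')) = 1 := by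
  calc (d + (c ∘L r) ∘L b) * (d' - ((d' ∘L c) ∘L s) ∘L (b ∘L d'))
      = d * d' + c ∘L r ∘L b ∘L d' - (d * d') ∘L c ∘L s ∘L b ∘L d' -
          c ∘L (r ∘L ((b ∘L d') ∘L c) ∘L s) ∘L b ∘L d' := by
        simp only [mul_def, add_comp, comp_sub, comp_assoc]
        abel
    _ = 1 := by
        rw [hrs, hd, one_def, id_comp]
        simp only [comp_sub, sub_comp]
        abel

theorem sub_mul_add_comp_comp_eq_one {d d' : E →L[𝕜] E} {c : X →L[𝕜] E} {b : E →L[𝕜] X}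
    {r s : X →L[𝕜] X} (hd : d' * d = 1) (hsr : s ∘L ((b ∘L d') ∘L c) ∘L r = r - s) :
    (d' - ((d' ∘L c) ∘L s) ∘L (b ∘L d')) * (d + (c ∘L r) ∘L b) = 1 := by
  calc (d' - ((d' ∘L c) ∘L s) ∘L (b ∘L d')) * (d + (c ∘L r) ∘L b)
      = d' * d + d' ∘L c ∘L r ∘L b - d' ∘L c ∘L s ∘L b ∘L (d' * d) -
          d' ∘L c ∘L (s ∘L ((b ∘L d') ∘L c) ∘L r) ∘L b := by
        simp only [mul_def, comp_add, sub_comp, comp_assoc]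
        abel
    _ = 1 := by
        rw [hsr, hd, one_def, comp_id]
        simp only [comp_sub, sub_comp]
        abel

/- The Woodbury identity. Since `b d⁻¹ c` is the difference of `n + b d⁻¹ c` and `n`, sandwiching it
between the inverses of these two operators gives the difference of the inverses. -/
theorem isUnit_and_inverse_add_comp_inverse_comp {d : E →L[𝕜] E} {n : X →L[𝕜] X}
    {c : X →L[𝕜] E} {b : E →L[𝕜] X} (hd : IsUnit d) (hn : IsUnit n)
    (hn' : IsUnit (n + (b ∘L d⁻¹ʳ) ∘L c)) :
    IsUnit (d + (c ∘L n⁻¹ʳ) ∘L b) ∧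
      (d + (c ∘L n⁻¹ʳ) ∘L b)⁻¹ʳ =
        d⁻¹ʳ - ((d⁻¹ʳ ∘L c) ∘L (n + (b ∘L d⁻¹ʳ) ∘L c)⁻¹ʳ) ∘L (b ∘L d⁻¹ʳ) := by
  set n' := n + (b ∘L d⁻¹ʳ) ∘L c with n'_def
  have hdiff : (b ∘L d⁻¹ʳ) ∘L c = n' - n := by rw [n'_def, add_sub_cancel_left]
  have hnn' : n⁻¹ʳ ∘L ((b ∘L d⁻¹ʳ) ∘L c) ∘L n'⁻¹ʳ = n⁻¹ʳ - n'⁻¹ʳ := by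
    rw [hdiff, Ring.inverse_sub_inverse (iff_of_true hn hn'), mul_assoc]
    rfl
  have hn'n : n'⁻¹ʳ ∘L ((b ∘L d⁻¹ʳ) ∘L c) ∘L n⁻¹ʳ = n⁻¹ʳ - n'⁻¹ʳ := by
    rw [hdiff, ← neg_sub n, neg_comp, comp_neg, ← neg_sub n'⁻¹ʳ,
      Ring.inverse_sub_inverse (iff_of_true hn' hn), mul_assoc]
    rfl
  let u : (E →L[𝕜] E)ˣ :=
    ⟨d + (c ∘L n⁻¹ʳ) ∘L b, d⁻¹ʳ - ((d⁻¹ʳ ∘L c) ∘L n'⁻¹ʳ) ∘L (b ∘L d⁻¹ʳ),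
      add_comp_comp_mul_sub_eq_one (Ring.mul_inverse_cancel d hd) hnn',
      sub_mul_add_comp_comp_eq_one (Ring.inverse_mul_cancel d hd) hn'n⟩
  exact ⟨u.isUnit, Ring.inverse_unit u⟩

end Algebra

section Realization

variable {𝕜 E F G X Y : Type*} [CommRing 𝕜]
  [AddCommGroup E] [Module 𝕜 E] [TopologicalSpace E]
  [AddCommGroup F] [Module 𝕜 F] [TopologicalSpace F] [IsTopologicalAddGroup F]
  [ContinuousConstSMul 𝕜 F]
  [AddCommGroup G] [Module 𝕜 G] [TopologicalSpace G] [IsTopologicalAddGroup G]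
  [ContinuousConstSMul 𝕜 G]
  [AddCommGroup X] [Module 𝕜 X] [TopologicalSpace X] [IsTopologicalAddGroup X]
  [ContinuousConstSMul 𝕜 X]
  [AddCommGroup Y] [Module 𝕜 Y] [TopologicalSpace Y] [IsTopologicalAddGroup Y]
  [ContinuousConstSMul 𝕜 Y]

/-- The function `d + z c (1 - z a)⁻¹ b`, a realization centred at `0`; it takes the junk value `d`
where `1 - z a` is not invertible. -/
def plusRealization (d : E →L[𝕜] F) (c : X →L[𝕜] F) (a : X →L[𝕜] X) (b : E →L[𝕜] X) (z : 𝕜) :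
    E →L[𝕜] F :=
  d + z • ((c ∘L (1 - z • a)⁻¹ʳ) ∘L b)

/-- The function `d + c (z - a)⁻¹ b`, a realization centred at `∞`; it takes the junk value `d`
where `z - a` is not invertible. -/
def minusRealization (d : E →L[𝕜] F) (c : X →L[𝕜] F) (a : X →L[𝕜] X) (b : E →L[𝕜] X) (z : 𝕜) :
    E →L[𝕜] F :=
  d + (c ∘L (z • (1 : X →L[𝕜] X) - a)⁻¹ʳ) ∘L b

theorem smul_inverse_comp_sub_comp_inverse {ap : X →L[𝕜] X} {am : Y →L[𝕜] Y} (q : X →L[𝕜] Y)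
    {z : 𝕜} (hp : IsUnit (1 - z • ap)) (hm : IsUnit (z • (1 : Y →L[𝕜] Y) - am)) :
    z • ((z • (1 : Y →L[𝕜] Y) - am)⁻¹ʳ ∘L (q - (am ∘L q) ∘L ap) ∘L (1 - z • ap)⁻¹ʳ) =
      q ∘L (1 - z • ap)⁻¹ʳ + ((z • (1 : Y →L[𝕜] Y) - am)⁻¹ʳ ∘L am) ∘L q := by
  set m := z • (1 : Y →L[𝕜] Y) - am with m_def
  set p := 1 - z • ap with p_def
  have hpp : p ∘L p⁻¹ʳ = 1 := Ring.mul_inverse_cancel p hp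
  have hmm : m⁻¹ʳ ∘L m = 1 := Ring.inverse_mul_cancel m hm
  have hsplit : z • (q - (am ∘L q) ∘L ap) = m ∘L q + (am ∘L q) ∘L p := by
    ext x
    simp [m_def, p_def, smul_sub]
  calc z • (m⁻¹ʳ ∘L (q - (am ∘L q) ∘L ap) ∘L p⁻¹ʳ)
      = m⁻¹ʳ ∘L (m ∘L q + (am ∘L q) ∘L p) ∘L p⁻¹ʳ := by
        rw [← hsplit, smul_comp, comp_smul]
    _ = (m⁻¹ʳ ∘L m) ∘L q ∘L p⁻¹ʳ + (m⁻¹ʳ ∘L am) ∘L q ∘L (p ∘L p⁻¹ʳ) := by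
        simp only [add_comp, comp_add, comp_assoc]
    _ = q ∘L p⁻¹ʳ + (m⁻¹ʳ ∘L am) ∘L q := by
        rw [hpp, hmm, one_def, one_def, id_comp, comp_id]

theorem plusRealization_add_eq_minusRealization_comp
    {d : E →L[𝕜] G} {cp : X →L[𝕜] G} {ap : X →L[𝕜] X} {bp : E →L[𝕜] X}
    {cm : Y →L[𝕜] G} {am : Y →L[𝕜] Y} {bm : E →L[𝕜] Y} {q : X →L[𝕜] Y}
    {dp : E →L[𝕜] F} {dm : F →L[𝕜] G} {cpc : X →L[𝕜] F} {bmc : F →L[𝕜] Y}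
    (hd : dm ∘L dp = d - (cm ∘L q) ∘L bp) (hc : dm ∘L cpc = cp - (cm ∘L q) ∘L ap)
    (hb : bmc ∘L dp = bm - (am ∘L q) ∘L bp) (hq : bmc ∘L cpc = q - (am ∘L q) ∘L ap) {z : 𝕜}
    (hp : IsUnit (1 - z • ap)) (hm : IsUnit (z • (1 : Y →L[𝕜] Y) - am)) :
    plusRealization d cp ap bp z + (cm ∘L (z • (1 : Y →L[𝕜] Y) - am)⁻¹ʳ) ∘L bm =
      minusRealization dm cm am bmc z ∘L plusRealization dp cpc ap bp z := by
  have hcross := smul_inverse_comp_sub_comp_inverse q hp hm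
  have hpp : z • (ap ∘L (1 - z • ap)⁻¹ʳ) = (1 - z • ap)⁻¹ʳ - 1 := by
    have hcancel := Ring.mul_inverse_cancel _ hp
    rw [sub_mul, one_mul, smul_mul_assoc, sub_eq_iff_eq_add'] at hcancel
    exact eq_sub_of_add_eq hcancel.symm
  unfold plusRealization minusRealization
  set m := (z • (1 : Y →L[𝕜] Y) - am)⁻¹ʳ
  set p := (1 - z • ap)⁻¹ʳ
  symm
  calc (dm + (cm ∘L m) ∘L bmc) ∘L (dp + z • ((cpc ∘L p) ∘L bp))
      = dm ∘L dp + z • ((dm ∘L cpc) ∘L p ∘L bp) + (cm ∘L m) ∘L (bmc ∘L dp) +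
          (cm ∘L (z • (m ∘L (bmc ∘L cpc) ∘L p))) ∘L bp := by
        simp only [add_comp, comp_add, comp_smul, smul_comp, smul_add, comp_assoc]
        abel
    _ = d - (cm ∘L q) ∘L bp + z • ((cp - (cm ∘L q) ∘L ap) ∘L p ∘L bp) +
          (cm ∘L m) ∘L (bm - (am ∘L q) ∘L bp) + (cm ∘L (q ∘L p + (m ∘L am) ∘L q)) ∘L bp := by
        rw [hd, hc, hb, hq, hcross]
    _ = d - (cm ∘L q) ∘L bp + z • ((cp ∘L p) ∘L bp) - (cm ∘L q ∘L (z • (ap ∘L p))) ∘L bp +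
          (cm ∘L m) ∘L bm + (cm ∘L q ∘L p) ∘L bp := by
        simp only [sub_comp, comp_sub, add_comp, comp_add, comp_smul, smul_comp, comp_assoc,
          smul_sub]
        abel
    _ = d + z • ((cp ∘L p) ∘L bp) + (cm ∘L m) ∘L bm := by
        rw [hpp, one_def]
        simp only [comp_sub, sub_comp, comp_id]
        abel

variable [IsTopologicalAddGroup E]

theorem isUnit_and_inverse_minusRealization {d : E →L[𝕜] E} {c : X →L[𝕜] E} {a : X →L[𝕜] X}
    {b : E →L[𝕜] X} {z : 𝕜} (hd : IsUnit d) (ha : IsUnit (z • (1 : X →L[𝕜] X) - a))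
    (ha' : IsUnit (z • (1 : X →L[𝕜] X) - associateOperator d c a b)) :
    IsUnit (minusRealization d c a b z) ∧
      (minusRealization d c a b z)⁻¹ʳ =
        d⁻¹ʳ - ((d⁻¹ʳ ∘L c) ∘L (z • (1 : X →L[𝕜] X) - associateOperator d c a b)⁻¹ʳ) ∘L
          (b ∘L d⁻¹ʳ) := by
  have hassoc : z • (1 : X →L[𝕜] X) - associateOperator d c a b =
      z • (1 : X →L[𝕜] X) - a + (b ∘L d⁻¹ʳ) ∘L c := by
    rw [associateOperator]
    abel
  rw [hassoc] at ha' ⊢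
  exact isUnit_and_inverse_add_comp_inverse_comp hd ha ha'

variable [ContinuousConstSMul 𝕜 E]

theorem isUnit_and_inverse_plusRealization {d : E →L[𝕜] E} {c : X →L[𝕜] E} {a : X →L[𝕜] X}
    {b : E →L[𝕜] X} {z : 𝕜} (hd : IsUnit d) (ha : IsUnit (1 - z • a))
    (ha' : IsUnit (1 - z • associateOperator d c a b)) :
    IsUnit (plusRealization d c a b z) ∧
      (plusRealization d c a b z)⁻¹ʳ =
        d⁻¹ʳ - z • (((d⁻¹ʳ ∘L c) ∘L (1 - z • associateOperator d c a b)⁻¹ʳ) ∘L (b ∘L d⁻¹ʳ)) := by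
  have hassoc : 1 - z • associateOperator d c a b = 1 - z • a + (b ∘L d⁻¹ʳ) ∘L (z • c) := by
    rw [associateOperator, comp_smul, smul_sub]
    abel
  rw [hassoc] at ha' ⊢
  simpa only [plusRealization, comp_smul, smul_comp] using
    isUnit_and_inverse_add_comp_inverse_comp hd ha ha'

end Realization

section Field

variable {𝕜 : Type*} [Field 𝕜] {E F X : Type*}
  [AddCommGroup E] [Module 𝕜 E] [TopologicalSpace E]
  [AddCommGroup F] [Module 𝕜 F] [TopologicalSpace F] [IsTopologicalAddGroup F]
  [ContinuousConstSMul 𝕜 F]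
  [AddCommGroup X] [Module 𝕜 X] [TopologicalSpace X] [IsTopologicalAddGroup X]
  [ContinuousConstSMul 𝕜 X]

theorem minusRealization_eq_plusRealization_inv (d : E →L[𝕜] F) (c : X →L[𝕜] F) (a : X →L[𝕜] X)
    (b : E →L[𝕜] X) {z : 𝕜} (hz : z ≠ 0) :
    minusRealization d c a b z = plusRealization d c a b z⁻¹ := by
  have hres : z • (z • (1 : X →L[𝕜] X) - a)⁻¹ʳ = (1 - z⁻¹ • a)⁻¹ʳ := by
    simpa [resolvent, Algebra.algebraMap_eq_smul_one, Units.smul_def] using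
      spectrum.units_smul_resolvent_self (r := Units.mk0 z hz) (a := a)
  rw [minusRealization, plusRealization, ← hres, comp_smul, smul_comp, inv_smul_smul₀ hz]

end Field

section SpectrumInUnitBall

variable {𝕜 A : Type*} [NormedField 𝕜] [Ring A] [Algebra 𝕜 A] {a : A} {z : 𝕜}

theorem isUnit_smul_one_sub_of_spectrum_subset_ball (ha : spectrum 𝕜 a ⊆ ball 0 1)
    (hz : 1 ≤ ‖z‖) : IsUnit (z • (1 : A) - a) := by
  rw [← Algebra.algebraMap_eq_smul_one, ← spectrum.notMem_iff]
  exact fun hmem => hz.not_gt (mem_ball_zero_iff.mp (ha hmem))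

theorem isUnit_one_sub_smul_of_spectrum_subset_ball (ha : spectrum 𝕜 a ⊆ ball 0 1)
    (hz : ‖z‖ ≤ 1) : IsUnit (1 - z • a) := by
  rcases eq_or_ne z 0 with rfl | hz0
  · rw [zero_smul, sub_zero]
    exact isUnit_one
  have hinv : IsUnit (z⁻¹ • (1 : A) - a) := by
    refine isUnit_smul_one_sub_of_spectrum_subset_ball ha ?_
    rw [norm_inv]
    exact (one_le_inv₀ (norm_pos_iff.mpr hz0)).mpr hz
  simpa only [Units.smul_mk0, smul_sub, smul_inv_smul₀ hz0] using hinv.smul (Units.mk0 z hz0)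

end SpectrumInUnitBall

section Analytic

variable {𝕜 : Type*} [NontriviallyNormedField 𝕜]

/-- `V` is analytic with invertible values and analytic pointwise inverse on an open neighborhood
of the closed unit disc: the condition `PlusFactor` for values in an arbitrary normed algebra. -/
def AnalyticUnitsOnClosedDisc {A : Type*} [NormedRing A] [NormedAlgebra 𝕜 A] (V : 𝕜 → A) : Prop :=
  ∃ S : Set 𝕜, IsOpen S ∧ closedBall (0 : 𝕜) 1 ⊆ S ∧
    AnalyticOnNhd 𝕜 V S ∧ (∀ z ∈ S, IsUnit (V z)) ∧ AnalyticOnNhd 𝕜 (fun z => (V z)⁻¹ʳ) S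

theorem isOpen_setOf_isUnit_one_sub_smul {A : Type*} [NormedRing A] [HasSummableGeomSeries A]
    [NormedAlgebra 𝕜 A] (a : A) : IsOpen {z : 𝕜 | IsUnit (1 - z • a)} :=
  Units.isOpen.preimage (by fun_prop)

variable {E F X : Type*} [NormedAddCommGroup E] [NormedSpace 𝕜 E]
  [NormedAddCommGroup F] [NormedSpace 𝕜 F]
  [NormedAddCommGroup X] [NormedSpace 𝕜 X] [CompleteSpace X]

theorem analyticOnNhd_plusRealization (d : E →L[𝕜] F) (c : X →L[𝕜] F) (a : X →L[𝕜] X)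
    (b : E →L[𝕜] X) : AnalyticOnNhd 𝕜 (plusRealization d c a b) {z | IsUnit (1 - z • a)} := by
  intro z hz
  have hpencil : AnalyticAt 𝕜 (fun w : 𝕜 => 1 - w • a) z :=
    analyticAt_const.sub (analyticAt_id.smul analyticAt_const)
  have hinv : AnalyticAt 𝕜 (fun w : 𝕜 => (1 - w • a)⁻¹ʳ) z :=
    AnalyticAt.comp (g := Ring.inverse) (analyticOnNhd_inverse _ hz) hpencil
  have hcomp : AnalyticAt 𝕜 (fun w : 𝕜 => (c ∘L (1 - w • a)⁻¹ʳ) ∘L b) z :=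
    (((compL 𝕜 E X F).flip b ∘L compL 𝕜 X X F c).analyticAt _).comp hinv
  exact analyticAt_const.add (analyticAt_id.smul hcomp)

theorem analyticUnitsOnClosedDisc_plusRealization {d : E →L[𝕜] E} {c : X →L[𝕜] E}
    {a : X →L[𝕜] X} {b : E →L[𝕜] X} (hd : IsUnit d) (ha : spectrum 𝕜 a ⊆ ball 0 1)
    (ha' : spectrum 𝕜 (associateOperator d c a b) ⊆ ball 0 1) :
    AnalyticUnitsOnClosedDisc (plusRealization d c a b) := by
  set a' := associateOperator d c a b
  have hopen := (isOpen_setOf_isUnit_one_sub_smul (𝕜 := 𝕜) a).inter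
    (isOpen_setOf_isUnit_one_sub_smul a')
  refine ⟨{z | IsUnit (1 - z • a)} ∩ {z | IsUnit (1 - z • a')}, hopen, fun z hz => ?_,
    (analyticOnNhd_plusRealization d c a b).mono Set.inter_subset_left,
    fun z hz => (isUnit_and_inverse_plusRealization hd hz.1 hz.2).1, ?_⟩
  · rw [mem_closedBall_zero_iff] at hz
    exact ⟨isUnit_one_sub_smul_of_spectrum_subset_ball ha hz,
      isUnit_one_sub_smul_of_spectrum_subset_ball ha' hz⟩
  · refine ((analyticOnNhd_plusRealization d⁻¹ʳ (-(d⁻¹ʳ ∘L c)) a' (b ∘L d⁻¹ʳ)).mono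
      Set.inter_subset_right).congr hopen fun z hz => ?_
    rw [(isUnit_and_inverse_plusRealization hd hz.1 hz.2).2, plusRealization, neg_comp, neg_comp,
      smul_neg, ← sub_eq_add_neg]

end Analytic

theorem rightCanonicalWH_of_stabilizing_solution_general {𝕜 E X Y : Type*}
    [NontriviallyNormedField 𝕜]
    [NormedAddCommGroup E] [NormedSpace 𝕜 E]
    [NormedAddCommGroup X] [NormedSpace 𝕜 X] [CompleteSpace X]
    [NormedAddCommGroup Y] [NormedSpace 𝕜 Y] [CompleteSpace Y]
    {δ : E →L[𝕜] E} {γp : X →L[𝕜] E} {αp : X →L[𝕜] X} {βp : E →L[𝕜] X}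
    {γm : Y →L[𝕜] E} {αm : Y →L[𝕜] Y} {βm : E →L[𝕜] Y}
    (hαp : spectrum 𝕜 αp ⊆ ball 0 1) (hαm : spectrum 𝕜 αm ⊆ ball 0 1)
    {Q : X →L[𝕜] Y}
    (hQ : Q = (αm ∘L Q) ∘L αp +
      ((βm - (αm ∘L Q) ∘L βp) ∘L (δ - (γm ∘L Q) ∘L βp)⁻¹ʳ) ∘L (γp - (γm ∘L Q) ∘L αp))
    {αpc : X →L[𝕜] X}
    (hαpc : αpc = αp - (βp ∘L (δ - (γm ∘L Q) ∘L βp)⁻¹ʳ) ∘L (γp - (γm ∘L Q) ∘L αp))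
    {αmc : Y →L[𝕜] Y}
    (hαmc : αmc = αm - ((βm - (αm ∘L Q) ∘L βp) ∘L (δ - (γm ∘L Q) ∘L βp)⁻¹ʳ) ∘L γm)
    (hσαpc : spectrum 𝕜 αpc ⊆ ball 0 1) (hσαmc : spectrum 𝕜 αmc ⊆ ball 0 1)
    {δm δp : E →L[𝕜] E} (hδm : IsUnit δm) (hδp : IsUnit δp)
    (hδ : δm * δp = δ - (γm ∘L Q) ∘L βp)
    {γpc : X →L[𝕜] E} (hγpc : γpc = δm⁻¹ʳ ∘L (γp - (γm ∘L Q) ∘L αp))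
    {βmc : E →L[𝕜] Y} (hβmc : βmc = (βm - (αm ∘L Q) ∘L βp) ∘L δp⁻¹ʳ)
    {R Vm Vp : 𝕜 → E →L[𝕜] E}
    (hR : ∀ z, R z = δ + z • ((γp ∘L (1 - z • αp)⁻¹ʳ) ∘L βp) +
      (γm ∘L (z • (1 : Y →L[𝕜] Y) - αm)⁻¹ʳ) ∘L βm)
    (hVm : ∀ z, Vm z = δm + (γm ∘L (z • (1 : Y →L[𝕜] Y) - αm)⁻¹ʳ) ∘L βmc)
    (hVp : ∀ z, Vp z = δp + z • ((γpc ∘L (1 - z • αp)⁻¹ʳ) ∘L βp)) :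
    (∀ z : 𝕜, IsUnit (1 - z • αp) → IsUnit (z • (1 : Y →L[𝕜] Y) - αm) → R z = Vm z * Vp z) ∧
    (∀ z : 𝕜, ‖z‖ = 1 → R z = Vm z * Vp z) ∧
    (∀ z : 𝕜, IsUnit (1 - z • αp) → IsUnit (1 - z • αpc) →
      IsUnit (Vp z) ∧ (Vp z)⁻¹ʳ =
        δp⁻¹ʳ - z • (((δp⁻¹ʳ ∘L γpc) ∘L (1 - z • αpc)⁻¹ʳ) ∘L (βp ∘L δp⁻¹ʳ))) ∧
    (∀ z : 𝕜, IsUnit (z • (1 : Y →L[𝕜] Y) - αm) → IsUnit (z • (1 : Y →L[𝕜] Y) - αmc) →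
      IsUnit (Vm z) ∧ (Vm z)⁻¹ʳ =
        δm⁻¹ʳ - ((δm⁻¹ʳ ∘L γm) ∘L (z • (1 : Y →L[𝕜] Y) - αmc)⁻¹ʳ) ∘L (βmc ∘L δm⁻¹ʳ)) ∧
    (∃ Vhat : 𝕜 → E →L[𝕜] E, AnalyticUnitsOnClosedDisc Vhat ∧ ∀ z, 1 ≤ ‖z‖ → Vm z = Vhat z⁻¹) ∧
    AnalyticUnitsOnClosedDisc Vp := by
  obtain rfl : R = fun z => plusRealization δ γp αp βp z +
    (γm ∘L (z • (1 : Y →L[𝕜] Y) - αm)⁻¹ʳ) ∘L βm := funext hR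
  obtain rfl : Vm = minusRealization δm γm αm βmc := funext hVm
  obtain rfl : Vp = plusRealization δp γpc αp βp := funext hVp
  have hinv : (δ - (γm ∘L Q) ∘L βp)⁻¹ʳ = δp⁻¹ʳ ∘L δm⁻¹ʳ := by
    rw [← hδ, Ring.inverse_mul (.inl hδm), mul_def]
  rw [hinv] at hQ hαpc hαmc
  obtain rfl : αpc = associateOperator δp γpc αp βp := by
    rw [hαpc, hγpc]
    rfl
  obtain rfl : αmc = associateOperator δm γm αm βmc := by
    rw [hαmc, hβmc]
    rfl
  have hγ : δm ∘L γpc = γp - (γm ∘L Q) ∘L αp := by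
    rw [hγpc, ← comp_assoc, ← mul_def, Ring.mul_inverse_cancel _ hδm, one_def, id_comp]
  have hβ : βmc ∘L δp = βm - (αm ∘L Q) ∘L βp := by
    rw [hβmc, comp_assoc, ← mul_def, Ring.inverse_mul_cancel _ hδp, one_def, comp_id]
  have hβγ : βmc ∘L γpc = Q - (αm ∘L Q) ∘L αp := by
    rw [eq_sub_iff_add_eq', hβmc, hγpc]
    exact hQ.symm
  have hfac (z : 𝕜) (hp : IsUnit (1 - z • αp)) (hm : IsUnit (z • (1 : Y →L[𝕜] Y) - αm)) :=
    plusRealization_add_eq_minusRealization_comp hδ hγ hβ hβγ hp hm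
  refine ⟨hfac, fun z hz => ?_, fun z => isUnit_and_inverse_plusRealization hδp,
    fun z => isUnit_and_inverse_minusRealization hδm, ?_, ?_⟩
  · exact hfac z (isUnit_one_sub_smul_of_spectrum_subset_ball hαp hz.le)
      (isUnit_smul_one_sub_of_spectrum_subset_ball hαm hz.ge)
  · refine ⟨_, analyticUnitsOnClosedDisc_plusRealization hδm hαm hσαmc, fun z hz => ?_⟩
    exact minusRealization_eq_plusRealization_inv _ _ _ _
      (norm_pos_iff.mp (zero_lt_one.trans_le hz))
  · exact analyticUnitsOnClosedDisc_plusRealization hδp hαp hσαpc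

/-- Given a stabilizing solution `Q` of the Riccati equation (R1) and a factorization
`δ₋δ₊ = δ − γ₋Qβ₊` with `δ₋, δ₊` invertible, the functions
`V₋(z) = δ₋ + γ₋(zI − α₋)⁻¹β₋°` and `V₊(z) = δ₊ + z·γ₊°(I − zα₊)⁻¹β₊` satisfy:
(a) `R(z) = V₋(z)V₊(z)` wherever `I − zα₊` and `zI − α₋` are invertible, in particular on
the unit circle; (b) wherever `I − zα₊` and `I − zα₊°` are invertible, `V₊(z)` is
invertible with the stated inverse formula; (c) wherever `zI − α₋` and `zI − α₋°` are
invertible, `V₋(z)` is invertible with the stated inverse formula.  Consequently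
`R = V₋V₊` is a right canonical Wiener–Hopf factorization of `R`. -/
theorem rightCanonicalWH_of_stabilizing_solution
    (δ : U →L[ℂ] U) (γp : Xp →L[ℂ] U) (αp : Xp →L[ℂ] Xp) (βp : U →L[ℂ] Xp)
    (γm : Xm →L[ℂ] U) (αm : Xm →L[ℂ] Xm) (βm : U →L[ℂ] Xm)
    (hαp : spectrum ℂ αp ⊆ ball (0 : ℂ) 1) (hαm : spectrum ℂ αm ⊆ ball (0 : ℂ) 1)
    (Q : Xp →L[ℂ] Xm)
    (hQ : SolvesR1 δ γp αp βp γm αm βm Q) (hQs : StabilizingR1 δ γp αp βp γm αm βm Q)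
    (δm δp : U →L[ℂ] U) (hδm : IsUnit δm) (hδp : IsUnit δp)
    (hδ : δm * δp = δ - (γm ∘L Q) ∘L βp)
    (γpc : Xp →L[ℂ] U) (hγpc : γpc = Ring.inverse δm ∘L (γp - (γm ∘L Q) ∘L αp))
    (βmc : U →L[ℂ] Xm) (hβmc : βmc = (βm - (αm ∘L Q) ∘L βp) ∘L Ring.inverse δp)
    (Vm Vp : ℂ → (U →L[ℂ] U))
    (hVm : ∀ z : ℂ, Vm z = δm + (γm ∘L Ring.inverse (z • (1 : Xm →L[ℂ] Xm) - αm)) ∘L βmc)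
    (hVp : ∀ z : ℂ, Vp z = δp + z • ((γpc ∘L Ring.inverse (1 - z • αp)) ∘L βp)) :
    -- (a) the factorization `R(z) = V₋(z)V₊(z)`
    (∀ z : ℂ, IsUnit ((1 : Xp →L[ℂ] Xp) - z • αp) →
      IsUnit (z • (1 : Xm →L[ℂ] Xm) - αm) →
      Rfun δ γp αp βp γm αm βm z = Vm z * Vp z) ∧
    -- (a) in particular, for all `z` on the unit circle
    (∀ z : ℂ, ‖z‖ = 1 → Rfun δ γp αp βp γm αm βm z = Vm z * Vp z) ∧
    -- (b) invertibility of `V₊(z)` and the formula for its inverse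
    (∀ z : ℂ, IsUnit ((1 : Xp →L[ℂ] Xp) - z • αp) →
      IsUnit ((1 : Xp →L[ℂ] Xp) - z • alphaPcirc δ γp αp βp γm Q) →
      IsUnit (Vp z) ∧
        Ring.inverse (Vp z) = Ring.inverse δp -
          z • (((Ring.inverse δp ∘L γpc) ∘L
            Ring.inverse (1 - z • alphaPcirc δ γp αp βp γm Q)) ∘L (βp ∘L Ring.inverse δp))) ∧
    -- (c) invertibility of `V₋(z)` and the formula for its inverse
    (∀ z : ℂ, IsUnit (z • (1 : Xm →L[ℂ] Xm) - αm) →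
      IsUnit (z • (1 : Xm →L[ℂ] Xm) - alphaMcirc δ βp γm αm βm Q) →
      IsUnit (Vm z) ∧
        Ring.inverse (Vm z) = Ring.inverse δm -
          ((Ring.inverse δm ∘L γm) ∘L
            Ring.inverse (z • (1 : Xm →L[ℂ] Xm) - alphaMcirc δ βp γm αm βm Q)) ∘L
              (βmc ∘L Ring.inverse δm)) ∧
    -- consequently, `R = V₋V₊` is a right canonical Wiener–Hopf factorization
    MinusFactor Vm ∧ PlusFactor Vp ∧ RightCanonicalWH (Rfun δ γp αp βp γm αm βm) := by
  obtain ⟨hfac, hcirc, hp, hm, hminus, hplus⟩ := rightCanonicalWH_of_stabilizing_solution_general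
    hαp hαm hQ.2 rfl rfl hQs.1 hQs.2 hδm hδp hδ hγpc hβmc (fun _ => rfl) hVm hVp
  exact ⟨hfac, hcirc, hp, hm, hminus, hplus, Vm, Vp, hminus, hplus, hcirc⟩
end
end

section
/- Suppose that R(z) is invertible for every z in an open annulus containing the unit circle 𝕋, and that R admits a right canonical Wiener–Hopf factorization. Then there exists a stabilizing solution Q ∈ B(X₊, X₋) of the Riccati equation (R1). -/
open Metric ContinuousLinearMap

noncomputable section

variable {U Xp Xm : Type*}
  [NormedAddCommGroup U] [InnerProductSpace ℂ U] [CompleteSpace U]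
  [NormedAddCommGroup Xp] [InnerProductSpace ℂ Xp] [CompleteSpace Xp]
  [NormedAddCommGroup Xm] [InnerProductSpace ℂ Xm] [CompleteSpace Xm]

/-!
Write `w = z⁻¹` and let `V(w) = V₋(1/w)`, so that `R(z) = V(w) V₊(z)` on the circle, where
`z (w - α₊) (1 - z α₊)⁻¹ = 1`. Every operator function analytic on the closed disc can be divided
by the linear pencils `w - α₊` (on the right) and `z - α₋` (on the left), with a constant remainder
that Liouville's theorem shows to be unique. Dividing

  `γ₊ = V(w) Γ + F(w) (w - α₊)`,  `β₋ = B V₊(z) + (z - α₋) G(z)`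

turns `R = V V₊` into identities between a function of `z` and a function of `w`, both analytic on
the closed disc and hence constant, which give the realizations

  `V₊(z) = V₊(0) + z Γ (1 - z α₊)⁻¹ β₊`,  `V(w) = V(0) + w γ₋ (1 - w α₋)⁻¹ B`.

Let `Q` solve the Stein equation `Q = α₋ Q α₊ + B Γ`. Comparing remainders gives
`γ₊ - γ₋ Q α₊ = V(0) Γ` and `β₋ - α₋ Q β₊ = B V₊(0)`, and then multiplying the two realizations
gives `δ - γ₋ Q β₊ = V(0) V₊(0)`. So the Stein equation is the Riccati equation, and `α₊°`, `α₋°`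
are the state operators of the inverse systems `V₊⁻¹`, `V⁻¹`, which are stable because `V₊` and `V`
are invertible on the closed disc.
-/

section Liouville

variable {E : Type*} [NormedAddCommGroup E] [NormedSpace ℂ E] [CompleteSpace E] {f g : ℂ → E}

theorem eqOn_ball_of_eq_inv_on_sphere (hf : DiffContOnCl ℂ f (ball 0 1))
    (hg : DiffContOnCl ℂ g (ball 0 1)) (h : ∀ z ∈ sphere (0 : ℂ) 1, f z = g z⁻¹) :
    Set.EqOn f (fun _ => g 0) (ball 0 1) := by
  intro w hw
  have hw1 : ‖w‖ < 1 := by simpa using hw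
  have hne : ∀ z ∈ closedBall (0 : ℂ) 1, 1 - w * z ≠ 0 := fun z hz h0 => by
    have hz1 : ‖z‖ ≤ 1 := by simpa using hz
    have : ‖w‖ * ‖z‖ = 1 := by rw [← norm_mul, ← sub_eq_zero.1 h0, norm_one]
    nlinarith [norm_nonneg w, norm_nonneg z]
  have hkernel : DiffContOnCl ℂ (fun z : ℂ => (1 - w * z)⁻¹) (ball 0 1) :=
    DiffContOnCl.inv (Differentiable.diffContOnCl (by fun_prop)) fun z hz =>
      hne z (closure_ball_subset_closedBall hz)
  calc
    f w = Real.circleAverage (fun z => (z / (z - w)) • f z) 0 1 := by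
      simpa using (DiffContOnCl.circleAverage_smul_div (c := 0) (R := 1) (w := w)
        (by simpa using hf) (by simpa using hw)).symm
    _ = Real.circleAverage (fun z => (1 - w * z⁻¹)⁻¹ • g z⁻¹) 0 1 := by
      refine Real.circleAverage_congr_sphere fun z hz => ?_
      have hz : z ∈ sphere (0 : ℂ) 1 := by simpa using hz
      have hz0 : z ≠ 0 := ne_of_mem_sphere hz one_ne_zero
      simp only [h z hz]
      congr 1
      rw [← div_eq_mul_inv, one_sub_div hz0, inv_div]
    _ = Real.circleAverage (fun z => (1 - w * z)⁻¹ • g z) 0 1 :=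
      Real.circleAverage_zero_one_congr_inv (f := fun z => (1 - w * z)⁻¹ • g z)
    _ = g 0 :=
      (DiffContOnCl.circleAverage (by simpa using hkernel.smul hg)).trans (by simp)

/-- The two sides of `h` glue to an analytic function on the Riemann sphere. -/
theorem eqOn_closedBall_of_eq_inv_on_sphere (hf : DiffContOnCl ℂ f (ball 0 1))
    (hg : DiffContOnCl ℂ g (ball 0 1)) (h : ∀ z ∈ sphere (0 : ℂ) 1, f z = g z⁻¹) :
    Set.EqOn f (fun _ => g 0) (closedBall 0 1) := by
  have hcl : closure (ball (0 : ℂ) 1) = closedBall 0 1 := closure_ball _ one_ne_zero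
  exact (eqOn_ball_of_eq_inv_on_sphere hf hg h).of_subset_closure
    (hcl ▸ hf.continuousOn) continuousOn_const ball_subset_closedBall hcl.ge

end Liouville

section Resolvent

theorem analyticOnNhd_ringInverse {A : Type*} [NormedRing A] [NormedAlgebra ℂ A]
    [HasSummableGeomSeries A] {f : ℂ → A} {s : Set ℂ} (hf : AnalyticOnNhd ℂ f s)
    (hu : ∀ z ∈ s, IsUnit (f z)) : AnalyticOnNhd ℂ (fun z => Ring.inverse (f z)) s :=
  analyticOnNhd_inverse.comp hf hu

theorem inv_smul_one_sub_mul_smul_inverse {K A : Type*} [Field K] [Ring A] [Algebra K A] {a : A}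
    {z : K} (hz : z ≠ 0) (ha : IsUnit (1 - z • a)) :
    (z⁻¹ • 1 - a) * (z • Ring.inverse (1 - z • a)) = 1 := by
  have h : z⁻¹ • 1 - a = z⁻¹ • (1 - z • a) := by rw [smul_sub, inv_smul_smul₀ hz]
  rw [h, smul_mul_smul_comm, inv_mul_cancel₀ hz, one_smul, Ring.mul_inverse_cancel _ ha]

theorem smul_inverse_mul_inv_smul_one_sub {K A : Type*} [Field K] [Ring A] [Algebra K A] {a : A}
    {z : K} (hz : z ≠ 0) (ha : IsUnit (1 - z • a)) :
    (z • Ring.inverse (1 - z • a)) * (z⁻¹ • 1 - a) = 1 := by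
  have h : z⁻¹ • 1 - a = z⁻¹ • (1 - z • a) := by rw [smul_sub, inv_smul_smul₀ hz]
  rw [h, smul_mul_smul_comm, mul_inv_cancel₀ hz, one_smul, Ring.inverse_mul_cancel _ ha]

theorem inverse_inv_smul_one_sub {K A : Type*} [Field K] [Ring A] [Algebra K A] {a : A}
    {z : K} (hz : z ≠ 0) (ha : IsUnit (1 - z • a)) :
    Ring.inverse (z⁻¹ • 1 - a) = z • Ring.inverse (1 - z • a) :=
  Ring.inverse_unit ⟨_, _, inv_smul_one_sub_mul_smul_inverse hz ha,
    smul_inverse_mul_inv_smul_one_sub hz ha⟩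

theorem spectrum_subset_ball_one_iff {A : Type*} [Ring A] [Algebra ℂ A] {a : A} :
    spectrum ℂ a ⊆ ball 0 1 ↔ ∀ w ∈ closedBall (0 : ℂ) 1, IsUnit (1 - w • a) := by
  have hunit : ∀ w : ℂ, w ≠ 0 → (IsUnit (1 - w • a) ↔ w⁻¹ ∉ spectrum ℂ a) := fun w hw => by
    have : 1 - w • a = Units.mk0 w hw • (algebraMap ℂ A w⁻¹ - a) := by
      rw [Units.smul_mk0, smul_sub, Algebra.algebraMap_eq_smul_one, smul_inv_smul₀ hw]
    rw [spectrum.notMem_iff, this, isUnit_smul_iff]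
  constructor
  · intro h w hw
    obtain rfl | hw0 := eq_or_ne w 0
    · simp
    · refine (hunit w hw0).2 fun hmem => ?_
      have hlt : ‖w‖⁻¹ < 1 := by simpa using h hmem
      exact hlt.not_ge ((one_le_inv₀ (norm_pos_iff.2 hw0)).2 (by simpa using hw))
  · intro h z hz
    by_contra hzb
    have hz1 : 1 ≤ ‖z‖ := by simpa using hzb
    have hz0 : z ≠ 0 := norm_pos_iff.1 (one_pos.trans_le hz1)
    have hw : z⁻¹ ∈ closedBall (0 : ℂ) 1 := by simpa using inv_le_one_of_one_le₀ hz1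
    exact (hunit z⁻¹ (inv_ne_zero hz0)).1 (h _ hw) (by rwa [inv_inv])

theorem analyticOnNhd_inverse_one_sub_smul {A : Type*} [NormedRing A] [NormedAlgebra ℂ A]
    [HasSummableGeomSeries A] {a : A} (ha : spectrum ℂ a ⊆ ball 0 1) :
    AnalyticOnNhd ℂ (fun w : ℂ => Ring.inverse (1 - w • a)) (closedBall 0 1) :=
  analyticOnNhd_ringInverse (fun _ _ => by fun_prop) (spectrum_subset_ball_one_iff.1 ha)

end Resolvent

section Division

variable {E : Type*} [NormedAddCommGroup E] [NormedSpace ℂ E] [CompleteSpace E] {T : E →L[ℂ] E}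

theorem map_circleIntegral {F : Type*} [NormedAddCommGroup F] [NormedSpace ℂ F] [CompleteSpace F]
    (S : E →L[ℂ] F) {f : ℂ → E} {c : ℂ} {r : ℝ} (hf : CircleIntegrable f c r) :
    S (∮ z in C(c, r), f z) = ∮ z in C(c, r), S (f z) := by
  simp only [circleIntegral, ← map_smul]
  exact (S.intervalIntegral_comp_comm hf.out).symm

theorem differentiableOn_circleIntegral_cauchy {f : ℂ → E} {c : ℂ} {r : ℝ} (hr : 0 < r)
    (hf : CircleIntegrable f c r) :
    DifferentiableOn ℂ
      (fun w => (2 * Real.pi * Complex.I : ℂ)⁻¹ • ∮ z in C(c, r), (z - w)⁻¹ • f z) (ball c r) := by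
  lift r to NNReal using hr.le
  rw [← Metric.eball_coe]
  exact (hasFPowerSeriesOn_cauchy_integral hf hr).differentiableOn

/-- The quotient is the Cauchy integral of `(z - T)⁻¹ f z`. -/
theorem exists_eq_add_smul_one_sub_apply_ball {r : ℝ} (hr : 0 < r) (hT : spectrum ℂ T ⊆ ball 0 r)
    {f : ℂ → E} (hf : DiffContOnCl ℂ f (ball 0 r)) :
    ∃ (q : E) (k : ℂ → E), DifferentiableOn ℂ k (ball 0 r) ∧
      ∀ w ∈ ball (0 : ℂ) r, f w = q + (w • 1 - T) (k w) := by
  set φ : ℂ → E := fun z => resolvent T z (f z)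
  have hres : ∀ z ∈ sphere (0 : ℂ) r, z ∈ resolventSet ℂ T := fun z hz => by
    by_contra hmem
    exact (hT hmem).ne hz
  have hfc : ContinuousOn f (sphere 0 r) :=
    hf.continuousOn_ball.mono sphere_subset_closedBall
  have hφc : ContinuousOn φ (sphere 0 r) := ContinuousOn.clm_apply
    (fun z hz => (spectrum.hasDerivAt_resolvent_const_left
      (hres z hz)).continuousAt.continuousWithinAt) hfc
  have hφi : CircleIntegrable φ 0 r := hφc.circleIntegrable hr.le
  refine ⟨(2 * Real.pi * Complex.I : ℂ)⁻¹ • ∮ z in C(0, r), φ z, _,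
    differentiableOn_circleIntegral_cauchy hr hφi, fun w hw => ?_⟩
  have hne : ∀ z ∈ sphere (0 : ℂ) r, z - w ≠ 0 := fun z hz h0 =>
    (mem_ball.1 hw).ne (sub_eq_zero.1 h0 ▸ hz)
  have hinv : ContinuousOn (fun z : ℂ => (z - w)⁻¹) (sphere 0 r) :=
    ContinuousOn.inv₀ (by fun_prop) hne
  have hTφ : ∀ z ∈ sphere (0 : ℂ) r,
      (w • 1 - T) ((z - w)⁻¹ • φ z) = (z - w)⁻¹ • f z - φ z := fun z hz => by
    have hφz : z • φ z - T (φ z) = f z := by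
      simpa [φ, resolvent] using congr($(Ring.mul_inverse_cancel _ (hres z hz)) (f z))
    have hcancel : φ z = (z - w)⁻¹ • (z - w) • φ z := (inv_smul_smul₀ (hne z hz) _).symm
    rw [← hφz]
    simp only [map_smul, sub_apply, smul_apply, one_apply_eq_self]
    linear_combination (norm := module) hcancel
  have hφwi : CircleIntegrable (fun z => (z - w)⁻¹ • φ z) 0 r :=
    (hinv.smul hφc).circleIntegrable hr.le
  have hfwi : CircleIntegrable (fun z => (z - w)⁻¹ • f z) 0 r :=
    (hinv.smul hfc).circleIntegrable hr.le
  rw [map_smul, map_circleIntegral _ hφwi, circleIntegral.integral_congr hr.le hTφ,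
    circleIntegral.integral_sub hfwi hφi, smul_sub,
    hf.two_pi_i_inv_smul_circleIntegral_sub_inv_smul hw]
  abel

theorem exists_eq_add_smul_one_sub_apply (hT : spectrum ℂ T ⊆ ball 0 1) {f : ℂ → E}
    (hf : AnalyticOnNhd ℂ f (closedBall 0 1)) :
    ∃ (q : E) (k : ℂ → E), DifferentiableOn ℂ k (closedBall 0 1) ∧
      ∀ w ∈ closedBall (0 : ℂ) 1, f w = q + (w • 1 - T) (k w) := by
  obtain ⟨ε, hε, hsub⟩ := (isCompact_closedBall (0 : ℂ) 1).exists_cthickening_subset_open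
    (isOpen_analyticAt ℂ f) hf
  rw [cthickening_closedBall hε.le zero_le_one] at hsub
  have hdisc : closedBall (0 : ℂ) 1 ⊆ ball 0 (ε + 1) := closedBall_subset_ball (by linarith)
  have hfd : DifferentiableOn ℂ f (closedBall 0 (ε + 1)) := fun z hz =>
    (hsub hz).differentiableAt.differentiableWithinAt
  obtain ⟨q, k, hk, hfk⟩ := exists_eq_add_smul_one_sub_apply_ball (by positivity)
    (hT.trans (ball_subset_closedBall.trans hdisc)) (hfd.diffContOnCl_ball subset_rfl)
  exact ⟨q, k, hk.mono hdisc, fun w hw => hfk w (hdisc hw)⟩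

theorem eq_zero_of_smul_one_sub_apply_eq (hT : spectrum ℂ T ⊆ ball 0 1) {k : ℂ → E} {c : E}
    (hk : DiffContOnCl ℂ k (ball 0 1))
    (h : ∀ z ∈ sphere (0 : ℂ) 1, (z • 1 - T) (k z) = c) : c = 0 := by
  have hinv := (analyticOnNhd_inverse_one_sub_smul hT).differentiableOn
  have hg : DifferentiableOn ℂ (fun w : ℂ => (w • Ring.inverse (1 - w • T)) c)
      (closedBall 0 1) := by
    fun_prop
  have hkg : ∀ z ∈ sphere (0 : ℂ) 1, k z = (z⁻¹ • Ring.inverse (1 - z⁻¹ • T)) c := fun z hz => by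
    have hz0 : z⁻¹ ≠ 0 := inv_ne_zero (ne_of_mem_sphere hz one_ne_zero)
    have hw : z⁻¹ ∈ closedBall (0 : ℂ) 1 := by simp [mem_sphere_zero_iff_norm.1 hz]
    have hT' := spectrum_subset_ball_one_iff.1 hT _ hw
    have hc : (z⁻¹⁻¹ • 1 - T) (k z) = c := by rw [inv_inv, h z hz]
    rw [← hc, ← mul_apply_eq_comp, smul_inverse_mul_inv_smul_one_sub hz0 hT', one_apply_eq_self]
  have hk1 : k 1 = 0 := by
    simpa using eqOn_closedBall_of_eq_inv_on_sphere hk (hg.diffContOnCl_ball subset_rfl) hkg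
      (by simp : (1 : ℂ) ∈ closedBall 0 1)
  rw [← h 1 (by simp), hk1, map_zero]

end Division

section OperatorDivision

variable {X Y : Type*} [NormedAddCommGroup X] [NormedSpace ℂ X]
  [NormedAddCommGroup Y] [NormedSpace ℂ Y]

theorem spectrum_compL_subset (α : Y →L[ℂ] Y) :
    spectrum ℂ (compL ℂ X Y Y α) ⊆ spectrum ℂ α := by
  intro z hz
  contrapose! hz
  rw [spectrum.notMem_iff, isUnit_iff_exists] at hz ⊢
  obtain ⟨b, hb, hb'⟩ := hz
  refine ⟨compL ℂ X Y Y b, ?_, ?_⟩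
  · ext T x
    simpa using congr($hb (T x))
  · ext T x
    simpa using congr($hb' (T x))

theorem spectrum_compL_flip_subset (α : X →L[ℂ] X) :
    spectrum ℂ ((compL ℂ X X Y).flip α) ⊆ spectrum ℂ α := by
  intro z hz
  contrapose! hz
  rw [spectrum.notMem_iff, isUnit_iff_exists] at hz ⊢
  obtain ⟨b, hb, hb'⟩ := hz
  refine ⟨(compL ℂ X X Y).flip b, ?_, ?_⟩
  · ext T x
    simpa using congr(T ($hb' x))
  · ext T x
    simpa using congr(T ($hb x))

theorem exists_eq_add_smul_one_sub_comp [CompleteSpace Y] {α : Y →L[ℂ] Y}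
    (hα : spectrum ℂ α ⊆ ball 0 1) {f : ℂ → X →L[ℂ] Y} (hf : AnalyticOnNhd ℂ f (closedBall 0 1)) :
    ∃ (B : X →L[ℂ] Y) (K : ℂ → X →L[ℂ] Y), DifferentiableOn ℂ K (closedBall 0 1) ∧
      ∀ z ∈ closedBall (0 : ℂ) 1, f z = B + (z • 1 - α) ∘L K z := by
  obtain ⟨B, K, hK, hfK⟩ :=
    exists_eq_add_smul_one_sub_apply ((spectrum_compL_subset α).trans hα) hf
  exact ⟨B, K, hK, hfK⟩

theorem exists_eq_add_comp_smul_one_sub [CompleteSpace Y] {α : X →L[ℂ] X}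
    (hα : spectrum ℂ α ⊆ ball 0 1) {f : ℂ → X →L[ℂ] Y} (hf : AnalyticOnNhd ℂ f (closedBall 0 1)) :
    ∃ (C : X →L[ℂ] Y) (K : ℂ → X →L[ℂ] Y), DifferentiableOn ℂ K (closedBall 0 1) ∧
      ∀ w ∈ closedBall (0 : ℂ) 1, f w = C + K w ∘L (w • 1 - α) := by
  obtain ⟨C, K, hK, hfK⟩ :=
    exists_eq_add_smul_one_sub_apply ((spectrum_compL_flip_subset α).trans hα) hf
  refine ⟨C, K, hK, fun w hw => ?_⟩
  rw [hfK w hw]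
  ext x
  simp

theorem eq_zero_of_smul_one_sub_comp_eq [CompleteSpace Y] {α : Y →L[ℂ] Y}
    (hα : spectrum ℂ α ⊆ ball 0 1) {K : ℂ → X →L[ℂ] Y} {B : X →L[ℂ] Y}
    (hK : DifferentiableOn ℂ K (closedBall 0 1))
    (h : ∀ z ∈ closedBall (0 : ℂ) 1, (z • 1 - α) ∘L K z = B) : B = 0 :=
  eq_zero_of_smul_one_sub_apply_eq ((spectrum_compL_subset α).trans hα)
    (hK.diffContOnCl_ball subset_rfl) fun z hz => h z (sphere_subset_closedBall hz)

theorem eq_zero_of_comp_smul_one_sub_eq [CompleteSpace Y] {α : X →L[ℂ] X}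
    (hα : spectrum ℂ α ⊆ ball 0 1) {K : ℂ → X →L[ℂ] Y} {C : X →L[ℂ] Y}
    (hK : DifferentiableOn ℂ K (closedBall 0 1))
    (h : ∀ w ∈ closedBall (0 : ℂ) 1, K w ∘L (w • 1 - α) = C) : C = 0 := by
  refine eq_zero_of_smul_one_sub_apply_eq ((spectrum_compL_flip_subset α).trans hα)
    (hK.diffContOnCl_ball subset_rfl) fun w hw => ?_
  rw [← h w (sphere_subset_closedBall hw)]
  ext x
  simp

end OperatorDivision

section TransferFunction

variable {E F X : Type*} [NormedAddCommGroup E] [NormedSpace ℂ E] [NormedAddCommGroup F]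
  [NormedSpace ℂ F] [NormedAddCommGroup X] [NormedSpace ℂ X]

/-- The transfer function `D + z C (1 - z A)⁻¹ B` of the discrete-time linear system with state
operator `A`, input operator `B`, output operator `C` and feedthrough `D`. -/
def transferFunction (D : E →L[ℂ] F) (C : X →L[ℂ] F) (A : X →L[ℂ] X) (B : E →L[ℂ] X) (z : ℂ) :
    E →L[ℂ] F :=
  D + z • (C ∘L Ring.inverse (1 - z • A) ∘L B)

theorem transferFunction_zero (D : E →L[ℂ] F) (C : X →L[ℂ] F) (A : X →L[ℂ] X) (B : E →L[ℂ] X) :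
    transferFunction D C A B 0 = D := by
  simp [transferFunction]

theorem differentiableOn_transferFunction [CompleteSpace X] {A : X →L[ℂ] X}
    (hA : spectrum ℂ A ⊆ ball 0 1) (D : E →L[ℂ] F) (C : X →L[ℂ] F) (B : E →L[ℂ] X) :
    DifferentiableOn ℂ (transferFunction D C A B) (closedBall 0 1) := by
  have := (analyticOnNhd_inverse_one_sub_smul hA).differentiableOn
  unfold transferFunction
  fun_prop

theorem isUnit_one_sub_comp_swap {S : E →L[ℂ] F} {T : F →L[ℂ] E} (h : IsUnit (1 - S ∘L T)) :
    IsUnit (1 - T ∘L S) := by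
  obtain ⟨R, hR, hR'⟩ := isUnit_iff_exists.1 h
  refine isUnit_iff_exists.2 ⟨1 + T ∘L R ∘L S, ?_, ?_⟩
  · ext x
    have := congr(T ($hR (S x)))
    simp only [mul_apply_eq_comp, sub_apply, one_apply_eq_self, comp_apply, map_sub] at this
    simp only [mul_apply_eq_comp, sub_apply, one_apply_eq_self, comp_apply, add_apply, map_add]
    linear_combination (norm := module) this
  · ext x
    have := congr(T ($hR' (S x)))
    simp only [mul_apply_eq_comp, sub_apply, one_apply_eq_self, comp_apply, map_sub] at this
    simp only [mul_apply_eq_comp, sub_apply, one_apply_eq_self, comp_apply, add_apply, map_sub]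
    linear_combination (norm := module) this

/-- `A - B D⁻¹ C` is the state operator of the inverse system. -/
theorem isUnit_one_sub_smul_sub_comp {A : X →L[ℂ] X} {B : E →L[ℂ] X} {C : X →L[ℂ] E}
    {D : E →L[ℂ] E} {z : ℂ} (hA : IsUnit (1 - z • A)) (hD : IsUnit D)
    (h : IsUnit (transferFunction D C A B z)) :
    IsUnit (1 - z • (A - B ∘L Ring.inverse D ∘L C)) := by
  set G : E →L[ℂ] X := z • (Ring.inverse (1 - z • A) ∘L B ∘L Ring.inverse D)
  have hswap : 1 - (-C) ∘L G = transferFunction D C A B z * Ring.inverse D := by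
    rw [transferFunction, add_mul, Ring.mul_inverse_cancel _ hD]
    ext x
    simp [G]
  have hfactor : 1 - z • (A - B ∘L Ring.inverse D ∘L C) = (1 - z • A) * (1 - G ∘L (-C)) := by
    have hG : (1 - z • A) ∘L G = z • (B ∘L Ring.inverse D) := by
      rw [comp_smul, ← comp_assoc]
      exact congr(z • $(Ring.mul_inverse_cancel _ hA) ∘L B ∘L Ring.inverse D)
    calc
      _ = (1 - z • A) + ((1 - z • A) ∘L G) ∘L C := by
        rw [hG]
        ext x
        simp only [sub_apply, add_apply, smul_apply, comp_apply]
        module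
      _ = _ := by
        ext x
        simp only [mul_apply_eq_comp, sub_apply, add_apply, smul_apply, comp_apply, neg_apply,
          one_apply_eq_self, map_neg, sub_neg_eq_add, map_add]
  rw [hfactor]
  exact hA.mul (isUnit_one_sub_comp_swap (hswap ▸ h.mul hD.ringInverse))

theorem spectrum_sub_comp_inverse_comp_subset_ball {A : X →L[ℂ] X} {B : E →L[ℂ] X}
    {C : X →L[ℂ] E} {D : E →L[ℂ] E} (hA : spectrum ℂ A ⊆ ball 0 1)
    (h : ∀ z ∈ closedBall (0 : ℂ) 1, IsUnit (transferFunction D C A B z)) :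
    spectrum ℂ (A - B ∘L Ring.inverse D ∘L C) ⊆ ball 0 1 := by
  have hD : IsUnit D := by simpa [transferFunction_zero] using h 0 (by simp)
  rw [spectrum_subset_ball_one_iff] at hA ⊢
  exact fun z hz => isUnit_one_sub_smul_sub_comp (hA z hz) hD (h z hz)

end TransferFunction

section Realization

variable {E F X : Type*} [NormedAddCommGroup E] [NormedSpace ℂ E]
  [NormedAddCommGroup F] [NormedSpace ℂ F] [NormedAddCommGroup X] [NormedSpace ℂ X]
  {α : X →L[ℂ] X}

theorem eq_transferFunction_of_comp_eq_right {M N : E →L[ℂ] E} {P G : F →L[ℂ] E}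
    {γ Γ Y : X →L[ℂ] E} {β : F →L[ℂ] X} {z : ℂ} (hz : z ≠ 0) (hα : IsUnit (1 - z • α))
    (hNM : N * M = 1) (hdiv : N ∘L γ = Γ + Y ∘L (z⁻¹ • 1 - α))
    (h : M ∘L P = G + z • (γ ∘L Ring.inverse (1 - z • α) ∘L β)) :
    P = transferFunction (N ∘L G + Y ∘L β) Γ α β z :=
  calc
    P = N ∘L M ∘L P := congr($hNM ∘L P).symm
    _ = N ∘L G + (N ∘L γ) ∘L (z • Ring.inverse (1 - z • α)) ∘L β := by
      rw [h, comp_add, smul_comp, comp_smul, comp_smul, comp_assoc]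
    _ = N ∘L G + (Γ ∘L (z • Ring.inverse (1 - z • α)) ∘L β +
        Y ∘L ((z⁻¹ • 1 - α) * (z • Ring.inverse (1 - z • α))) ∘L β) := by
      rw [hdiv, add_comp]
      rfl
    _ = _ := by
      rw [inv_smul_one_sub_mul_smul_inverse hz hα, transferFunction, smul_comp, comp_smul,
        one_def, id_comp]
      abel

theorem eq_transferFunction_of_comp_eq_left {P N : E →L[ℂ] E} {M G : E →L[ℂ] F}
    {γ : X →L[ℂ] F} {β B Y : E →L[ℂ] X} {w : ℂ} (hw : w ≠ 0) (hα : IsUnit (1 - w • α))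
    (hPN : P * N = 1) (hdiv : β ∘L N = B + (w⁻¹ • 1 - α) ∘L Y)
    (h : M ∘L P = G + w • (γ ∘L Ring.inverse (1 - w • α) ∘L β)) :
    M = transferFunction (G ∘L N + γ ∘L Y) γ α B w :=
  calc
    M = (M ∘L P) ∘L N := congr(M ∘L $hPN).symm
    _ = G ∘L N + γ ∘L (w • Ring.inverse (1 - w • α)) ∘L β ∘L N := by
      rw [h, add_comp, smul_comp, smul_comp, comp_smul, comp_assoc, comp_assoc]
    _ = G ∘L N + (γ ∘L (w • Ring.inverse (1 - w • α)) ∘L B +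
        γ ∘L ((w • Ring.inverse (1 - w • α)) * (w⁻¹ • 1 - α)) ∘L Y) := by
      rw [hdiv, comp_add, comp_add]
      rfl
    _ = _ := by
      rw [smul_inverse_mul_inv_smul_one_sub hw hα, transferFunction, smul_comp, comp_smul,
        one_def, id_comp]
      abel

variable [CompleteSpace E] [CompleteSpace X]

/-- The output operator `Γ` of `P` is the remainder of `M⁻¹ γ` on right division by `w - α`. -/
theorem exists_eq_transferFunction_right {M : ℂ → E →L[ℂ] E} {P G : ℂ → F →L[ℂ] E}
    {γ : X →L[ℂ] E} {β : F →L[ℂ] X} (hα : spectrum ℂ α ⊆ ball 0 1)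
    (hM : AnalyticOnNhd ℂ M (closedBall 0 1)) (hMu : ∀ w ∈ closedBall (0 : ℂ) 1, IsUnit (M w))
    (hP : DifferentiableOn ℂ P (closedBall 0 1)) (hG : DifferentiableOn ℂ G (closedBall 0 1))
    (h : ∀ z ∈ sphere (0 : ℂ) 1,
      M z⁻¹ ∘L P z = G z⁻¹ + z • (γ ∘L Ring.inverse (1 - z • α) ∘L β)) :
    ∃ (Γ : X →L[ℂ] E) (K : ℂ → X →L[ℂ] E), DifferentiableOn ℂ K (closedBall 0 1) ∧
      (∀ w ∈ closedBall (0 : ℂ) 1, γ = M w ∘L Γ + K w ∘L (w • 1 - α)) ∧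
      ∀ z ∈ closedBall (0 : ℂ) 1, P z = transferFunction (P 0) Γ α β z := by
  have hN : AnalyticOnNhd ℂ (fun w => Ring.inverse (M w)) (closedBall 0 1) :=
    analyticOnNhd_ringInverse hM hMu
  obtain ⟨Γ, Y, hY, hdiv⟩ := exists_eq_add_comp_smul_one_sub hα
    (((compL ℂ X E E).flip γ).comp_analyticOnNhd hN)
  have hMd := hM.differentiableOn
  have hT := differentiableOn_transferFunction hα 0 Γ β
  refine ⟨Γ, fun w => M w ∘L Y w, by fun_prop, fun w hw => ?_, fun z hz => ?_⟩
  · calc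
      γ = M w ∘L Ring.inverse (M w) ∘L γ :=
        congr($(Ring.mul_inverse_cancel _ (hMu w hw)) ∘L γ).symm
      _ = M w ∘L (Γ + Y w ∘L (w • 1 - α)) := congr(M w ∘L $(hdiv w hw))
      _ = _ := by rw [comp_add, comp_assoc]
  · have hf : DifferentiableOn ℂ (fun z => P z - transferFunction 0 Γ α β z) (closedBall 0 1) := by
      fun_prop
    have hg : DifferentiableOn ℂ (fun w => Ring.inverse (M w) ∘L G w + Y w ∘L β)
        (closedBall 0 1) := by
      have := hN.differentiableOn
      fun_prop
    have hfg : ∀ z ∈ sphere (0 : ℂ) 1, P z - transferFunction 0 Γ α β z =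
        Ring.inverse (M z⁻¹) ∘L G z⁻¹ + Y z⁻¹ ∘L β := fun z hz => by
      have hz0 : z ≠ 0 := ne_of_mem_sphere hz one_ne_zero
      have hw : z⁻¹ ∈ closedBall (0 : ℂ) 1 := by simp [mem_sphere_zero_iff_norm.1 hz]
      have hPz := eq_transferFunction_of_comp_eq_right hz0
        (spectrum_subset_ball_one_iff.1 hα z (sphere_subset_closedBall hz))
        (Ring.inverse_mul_cancel _ (hMu _ hw)) (hdiv _ hw) (h z hz)
      rw [hPz, transferFunction, transferFunction, zero_add, add_sub_cancel_right]
    have hconst := eqOn_closedBall_of_eq_inv_on_sphere (hf.diffContOnCl_ball subset_rfl)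
      (hg.diffContOnCl_ball subset_rfl) hfg
    have hz0 := (hconst hz).trans (hconst (mem_closedBall_self zero_le_one)).symm
    simp only [transferFunction, zero_add, zero_smul, sub_zero] at hz0 ⊢
    rw [← hz0, sub_add_cancel]

/-- The input operator `B` of `M` is the remainder of `β P⁻¹` on left division by `z - α`. -/
theorem exists_eq_transferFunction_left [CompleteSpace F] {P : ℂ → E →L[ℂ] E} {M G : ℂ → E →L[ℂ] F}
    {γ : X →L[ℂ] F} {β : E →L[ℂ] X} (hα : spectrum ℂ α ⊆ ball 0 1)
    (hP : AnalyticOnNhd ℂ P (closedBall 0 1)) (hPu : ∀ z ∈ closedBall (0 : ℂ) 1, IsUnit (P z))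
    (hM : DifferentiableOn ℂ M (closedBall 0 1)) (hG : DifferentiableOn ℂ G (closedBall 0 1))
    (h : ∀ w ∈ sphere (0 : ℂ) 1,
      M w ∘L P w⁻¹ = G w⁻¹ + w • (γ ∘L Ring.inverse (1 - w • α) ∘L β)) :
    ∃ (B : E →L[ℂ] X) (K : ℂ → E →L[ℂ] X), DifferentiableOn ℂ K (closedBall 0 1) ∧
      (∀ z ∈ closedBall (0 : ℂ) 1, β = B ∘L P z + (z • 1 - α) ∘L K z) ∧
      ∀ w ∈ closedBall (0 : ℂ) 1, M w = transferFunction (M 0) γ α B w := by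
  have hN : AnalyticOnNhd ℂ (fun z => Ring.inverse (P z)) (closedBall 0 1) :=
    analyticOnNhd_ringInverse hP hPu
  obtain ⟨B, Y, hY, hdiv⟩ := exists_eq_add_smul_one_sub_comp hα
    ((compL ℂ E E X β).comp_analyticOnNhd hN)
  have hPd := hP.differentiableOn
  have hT := differentiableOn_transferFunction hα 0 γ B
  refine ⟨B, fun z => Y z ∘L P z, by fun_prop, fun z hz => ?_, fun w hw => ?_⟩
  · calc
      β = (β ∘L Ring.inverse (P z)) ∘L P z :=
        congr(β ∘L $(Ring.inverse_mul_cancel _ (hPu z hz))).symm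
      _ = (B + (z • 1 - α) ∘L Y z) ∘L P z := congr($(hdiv z hz) ∘L P z)
      _ = _ := by rw [add_comp, comp_assoc]
  · have hf : DifferentiableOn ℂ (fun w => M w - transferFunction 0 γ α B w) (closedBall 0 1) := by
      fun_prop
    have hg : DifferentiableOn ℂ (fun z => G z ∘L Ring.inverse (P z) + γ ∘L Y z)
        (closedBall 0 1) := by
      have := hN.differentiableOn
      fun_prop
    have hfg : ∀ w ∈ sphere (0 : ℂ) 1, M w - transferFunction 0 γ α B w =
        G w⁻¹ ∘L Ring.inverse (P w⁻¹) + γ ∘L Y w⁻¹ := fun w hw => by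
      have hw0 : w ≠ 0 := ne_of_mem_sphere hw one_ne_zero
      have hz : w⁻¹ ∈ closedBall (0 : ℂ) 1 := by simp [mem_sphere_zero_iff_norm.1 hw]
      have hMw := eq_transferFunction_of_comp_eq_left hw0
        (spectrum_subset_ball_one_iff.1 hα w (sphere_subset_closedBall hw))
        (Ring.mul_inverse_cancel _ (hPu _ hz)) (hdiv _ hz) (h w hw)
      rw [hMw, transferFunction, transferFunction, zero_add, add_sub_cancel_right]
    have hconst := eqOn_closedBall_of_eq_inv_on_sphere (hf.diffContOnCl_ball subset_rfl)
      (hg.diffContOnCl_ball subset_rfl) hfg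
    have hw0 := (hconst hw).trans (hconst (mem_closedBall_self zero_le_one)).symm
    simp only [transferFunction, zero_add, zero_smul, sub_zero] at hw0 ⊢
    rw [← hw0, sub_add_cancel]

end Realization

section Stein

variable {X Y : Type*} [NormedAddCommGroup X] [NormedSpace ℂ X] [CompleteSpace X]
  [NormedAddCommGroup Y] [NormedSpace ℂ Y] [CompleteSpace Y] {α : Y →L[ℂ] Y} {β : X →L[ℂ] X}

/-- The solution is the remainder of `C (1 - z β)⁻¹` on left division by `z - α`. -/
theorem exists_eq_comp_comp_add (hα : spectrum ℂ α ⊆ ball 0 1) (hβ : spectrum ℂ β ⊆ ball 0 1)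
    (C : X →L[ℂ] Y) : ∃ Q : X →L[ℂ] Y, Q = α ∘L Q ∘L β + C := by
  obtain ⟨Q, K, hK, hdiv⟩ := exists_eq_add_smul_one_sub_comp hα
    ((compL ℂ X X Y C).comp_analyticOnNhd (analyticOnNhd_inverse_one_sub_smul hβ))
  refine ⟨Q, ?_⟩
  have hzero : C - Q + α ∘L Q ∘L β = 0 := by
    refine eq_zero_of_smul_one_sub_comp_eq hα (K := fun z => K z ∘L (1 - z • β) - Q ∘L β)
      (by fun_prop) fun z hz => ?_
    have hC : C = Q ∘L (1 - z • β) + ((z • 1 - α) ∘L K z) ∘L (1 - z • β) := by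
      rw [← add_comp, ← hdiv z hz]
      exact congr(C ∘L $(Ring.inverse_mul_cancel _ (spectrum_subset_ball_one_iff.1 hβ z hz))).symm
    nth_rw 1 [hC]
    ext x
    simp only [comp_apply, sub_apply, add_apply, smul_apply, one_apply_eq_self, map_sub, map_smul]
    module
  rw [← sub_eq_zero, ← neg_eq_zero, ← hzero]
  abel

end Stein

section Riccati

variable {E F X Y : Type*} [NormedAddCommGroup E] [NormedSpace ℂ E]
  [NormedAddCommGroup F] [NormedSpace ℂ F] [NormedAddCommGroup X] [NormedSpace ℂ X]
  [NormedAddCommGroup Y] [NormedSpace ℂ Y] {α : Y →L[ℂ] Y} {β : X →L[ℂ] X} {Q : X →L[ℂ] Y}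

theorem smul_inverse_comp_sub_comp {w : ℂ} (hα : IsUnit (1 - w • α)) :
    w • (Ring.inverse (1 - w • α) ∘L (Q - α ∘L Q ∘L β)) =
      Q ∘L β + Ring.inverse (1 - w • α) ∘L Q ∘L (w • 1 - β) := by
  ext x
  have hinv := congr($(Ring.inverse_mul_cancel _ hα) (Q (β x)))
  simp only [mul_apply_eq_comp, sub_apply, smul_apply, one_apply_eq_self, map_sub,
    map_smul] at hinv
  simp only [comp_apply, sub_apply, add_apply, smul_apply, one_apply_eq_self, map_sub, map_smul]
  linear_combination (norm := module) hinv

theorem smul_sub_comp_comp_inverse {z : ℂ} (hβ : IsUnit (1 - z • β)) :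
    z • ((Q - α ∘L Q ∘L β) ∘L Ring.inverse (1 - z • β)) =
      α ∘L Q + (z • 1 - α) ∘L Q ∘L Ring.inverse (1 - z • β) := by
  ext x
  have hinv := congr(α (Q ($(Ring.mul_inverse_cancel _ hβ) x)))
  simp only [mul_apply_eq_comp, sub_apply, smul_apply, one_apply_eq_self, map_sub,
    map_smul] at hinv
  simp only [comp_apply, sub_apply, add_apply, smul_apply, one_apply_eq_self]
  linear_combination (norm := module) hinv

variable {γ : Y →L[ℂ] F} {B : E →L[ℂ] Y} {Γ : X →L[ℂ] E}

theorem sub_comp_comp_eq_feedthrough_comp [CompleteSpace Y] [CompleteSpace F]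
    {D : E →L[ℂ] F} {η : X →L[ℂ] F} {K : ℂ → X →L[ℂ] F}
    (hα : spectrum ℂ α ⊆ ball 0 1) (hβ : spectrum ℂ β ⊆ ball 0 1)
    (hQ : Q = α ∘L Q ∘L β + B ∘L Γ) (hK : DifferentiableOn ℂ K (closedBall 0 1))
    (hη : ∀ w ∈ closedBall (0 : ℂ) 1,
      η = transferFunction D γ α B w ∘L Γ + K w ∘L (w • 1 - β)) :
    η - γ ∘L Q ∘L β = D ∘L Γ := by
  have hinv := (analyticOnNhd_inverse_one_sub_smul hα).differentiableOn
  refine sub_eq_zero.1 (eq_zero_of_comp_smul_one_sub_eq hβ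
    (K := fun w => K w + γ ∘L Ring.inverse (1 - w • α) ∘L Q) (by fun_prop) fun w hw => ?_)
  have hstein := smul_inverse_comp_sub_comp (Q := Q) (β := β)
    (spectrum_subset_ball_one_iff.1 hα w hw)
  rw [← eq_sub_iff_add_eq'.2 hQ.symm] at hstein
  nth_rw 1 [hη w hw]
  ext x
  have hsteinx := congr(γ ($hstein x))
  simp only [comp_apply, sub_apply, add_apply, smul_apply, one_apply_eq_self, map_add,
    map_smul] at hsteinx
  simp only [transferFunction, comp_apply, sub_apply, add_apply, smul_apply, one_apply_eq_self]
  linear_combination (norm := module) -hsteinx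

theorem sub_comp_comp_eq_comp_feedthrough [CompleteSpace X] [CompleteSpace Y]
    {D : F →L[ℂ] E} {η : F →L[ℂ] Y} {b : F →L[ℂ] X} {K : ℂ → F →L[ℂ] Y}
    (hα : spectrum ℂ α ⊆ ball 0 1) (hβ : spectrum ℂ β ⊆ ball 0 1)
    (hQ : Q = α ∘L Q ∘L β + B ∘L Γ) (hK : DifferentiableOn ℂ K (closedBall 0 1))
    (hη : ∀ z ∈ closedBall (0 : ℂ) 1,
      η = B ∘L transferFunction D Γ β b z + (z • 1 - α) ∘L K z) :
    η - α ∘L Q ∘L b = B ∘L D := by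
  have hinv := (analyticOnNhd_inverse_one_sub_smul hβ).differentiableOn
  refine sub_eq_zero.1 (eq_zero_of_smul_one_sub_comp_eq hα
    (K := fun z => K z + Q ∘L Ring.inverse (1 - z • β) ∘L b) (by fun_prop) fun z hz => ?_)
  have hstein := smul_sub_comp_comp_inverse (Q := Q) (α := α)
    (spectrum_subset_ball_one_iff.1 hβ z hz)
  rw [← eq_sub_iff_add_eq'.2 hQ.symm] at hstein
  nth_rw 1 [hη z hz]
  ext x
  have hsteinx := congr($hstein (b x))
  simp only [comp_apply, sub_apply, add_apply, smul_apply, one_apply_eq_self] at hsteinx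
  simp only [transferFunction, comp_apply, sub_apply, add_apply, smul_apply, one_apply_eq_self,
    map_add, map_smul]
  linear_combination (norm := module) -hsteinx

theorem transferFunction_inv_comp_transferFunction {G : Type*} [NormedAddCommGroup G]
    [NormedSpace ℂ G] {M₀ : E →L[ℂ] F} {P₀ : G →L[ℂ] E} {γ' : X →L[ℂ] F} {η : G →L[ℂ] Y}
    {b : G →L[ℂ] X} {z : ℂ} (hz : z ≠ 0) (hα : IsUnit (1 - z⁻¹ • α)) (hβ : IsUnit (1 - z • β))
    (hQ : Q = α ∘L Q ∘L β + B ∘L Γ) (hΓ : γ' - γ ∘L Q ∘L β = M₀ ∘L Γ)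
    (hB : η - α ∘L Q ∘L b = B ∘L P₀) :
    transferFunction M₀ γ α B z⁻¹ ∘L transferFunction P₀ Γ β b z =
      M₀ ∘L P₀ + γ ∘L Q ∘L b + z • (γ' ∘L Ring.inverse (1 - z • β) ∘L b) +
        z⁻¹ • (γ ∘L Ring.inverse (1 - z⁻¹ • α) ∘L η) := by
  have hstein := smul_inverse_comp_sub_comp (Q := Q) (β := β) hα
  rw [← eq_sub_iff_add_eq'.2 hQ.symm] at hstein
  ext x
  have hΓx := congr($hΓ (Ring.inverse (1 - z • β) (b x)))
  have hBx := congr(γ (Ring.inverse (1 - z⁻¹ • α) ($hB x)))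
  have hsteinx := congr(γ ($hstein (z • Ring.inverse (1 - z • β) (b x))))
  have hαx := congr(γ ($(Ring.inverse_mul_cancel _ hα) (Q (b x))))
  have hβx := congr(γ (Ring.inverse (1 - z⁻¹ • α)
    (Q ($(inv_smul_one_sub_mul_smul_inverse hz hβ) (b x)))))
  simp only [mul_apply_eq_comp, comp_apply, sub_apply, add_apply, smul_apply, one_apply_eq_self,
    map_add, map_sub, map_smul] at hΓx hBx hsteinx hαx hβx
  simp only [transferFunction, comp_apply, add_apply, smul_apply, map_add, map_smul]
  linear_combination (norm := module) hsteinx + hβx + hαx - z • hΓx - z⁻¹ • hBx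

end Riccati

section RightFactorization

variable {E X Y : Type*} [NormedAddCommGroup E] [NormedSpace ℂ E] [CompleteSpace E]
  [NormedAddCommGroup X] [NormedSpace ℂ X] [CompleteSpace X]
  [NormedAddCommGroup Y] [NormedSpace ℂ Y] [CompleteSpace Y]

theorem exists_realization_of_rightFactorization {δ : E →L[ℂ] E} {γp : X →L[ℂ] E}
    {αp : X →L[ℂ] X} {βp : E →L[ℂ] X} {γm : Y →L[ℂ] E} {αm : Y →L[ℂ] Y} {βm : E →L[ℂ] Y}
    (hαp : spectrum ℂ αp ⊆ ball 0 1) (hαm : spectrum ℂ αm ⊆ ball 0 1) {M P : ℂ → E →L[ℂ] E}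
    (hM : AnalyticOnNhd ℂ M (closedBall 0 1)) (hMu : ∀ w ∈ closedBall (0 : ℂ) 1, IsUnit (M w))
    (hP : AnalyticOnNhd ℂ P (closedBall 0 1)) (hPu : ∀ z ∈ closedBall (0 : ℂ) 1, IsUnit (P z))
    (h : ∀ z ∈ sphere (0 : ℂ) 1, M z⁻¹ ∘L P z =
      δ + z • (γp ∘L Ring.inverse (1 - z • αp) ∘L βp) +
        z⁻¹ • (γm ∘L Ring.inverse (1 - z⁻¹ • αm) ∘L βm)) :
    ∃ (Q : X →L[ℂ] Y) (Γ : X →L[ℂ] E) (B : E →L[ℂ] Y),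
      (∀ z ∈ closedBall (0 : ℂ) 1, P z = transferFunction (P 0) Γ αp βp z) ∧
      (∀ w ∈ closedBall (0 : ℂ) 1, M w = transferFunction (M 0) γm αm B w) ∧
      Q = αm ∘L Q ∘L αp + B ∘L Γ ∧ γp - γm ∘L Q ∘L αp = M 0 ∘L Γ ∧
      βm - αm ∘L Q ∘L βp = B ∘L P 0 ∧ δ - γm ∘L Q ∘L βp = M 0 ∘L P 0 := by
  obtain ⟨Γ, K, hK, hγp, hPΓ⟩ := exists_eq_transferFunction_right hαp hM hMu
    hP.differentiableOn (differentiableOn_transferFunction hαm δ γm βm) fun z hz => by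
      rw [h z hz, transferFunction]
      abel
  obtain ⟨B, L, hL, hβm, hMB⟩ := exists_eq_transferFunction_left hαm hP hPu
    hM.differentiableOn (differentiableOn_transferFunction hαp δ γp βp) fun w hw => by
      have hw' : w⁻¹ ∈ sphere (0 : ℂ) 1 := by simp [mem_sphere_zero_iff_norm.1 hw]
      simpa only [inv_inv, transferFunction] using h w⁻¹ hw'
  obtain ⟨Q, hQ⟩ := exists_eq_comp_comp_add hαm hαp (B ∘L Γ)
  have hΓ : γp - γm ∘L Q ∘L αp = M 0 ∘L Γ :=
    sub_comp_comp_eq_feedthrough_comp hαm hαp hQ hK fun w hw => hMB w hw ▸ hγp w hw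
  have hB : βm - αm ∘L Q ∘L βp = B ∘L P 0 :=
    sub_comp_comp_eq_comp_feedthrough hαm hαp hQ hL fun z hz => hPΓ z hz ▸ hβm z hz
  refine ⟨Q, Γ, B, hPΓ, hMB, hQ, hΓ, hB, ?_⟩
  have hone : (1 : ℂ) ∈ closedBall 0 1 := by simp
  have hprod := transferFunction_inv_comp_transferFunction one_ne_zero
    (by simpa using spectrum_subset_ball_one_iff.1 hαm 1 hone)
    (spectrum_subset_ball_one_iff.1 hαp 1 hone) hQ hΓ hB
  rw [← hPΓ 1 hone, ← hMB _ (by simp), h 1 (by simp)] at hprod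
  linear_combination (norm := abel) hprod

theorem exists_stabilizing_solution_of_rightCanonicalWH_general
    (δ : E →L[ℂ] E) (γp : X →L[ℂ] E) (αp : X →L[ℂ] X) (βp : E →L[ℂ] X)
    (γm : Y →L[ℂ] E) (αm : Y →L[ℂ] Y) (βm : E →L[ℂ] Y)
    (hαp : spectrum ℂ αp ⊆ ball 0 1) (hαm : spectrum ℂ αm ⊆ ball 0 1) {M P : ℂ → E →L[ℂ] E}
    (hM : AnalyticOnNhd ℂ M (closedBall 0 1)) (hMu : ∀ w ∈ closedBall (0 : ℂ) 1, IsUnit (M w))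
    (hP : AnalyticOnNhd ℂ P (closedBall 0 1)) (hPu : ∀ z ∈ closedBall (0 : ℂ) 1, IsUnit (P z))
    (h : ∀ z : ℂ, ‖z‖ = 1 → δ + z • (γp ∘L Ring.inverse (1 - z • αp) ∘L βp) +
      γm ∘L Ring.inverse (z • 1 - αm) ∘L βm = M z⁻¹ * P z) :
    ∃ Q : X →L[ℂ] Y,
      (IsUnit (δ - γm ∘L Q ∘L βp) ∧
        Q = αm ∘L Q ∘L αp + (βm - αm ∘L Q ∘L βp) ∘L Ring.inverse (δ - γm ∘L Q ∘L βp) ∘L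
          (γp - γm ∘L Q ∘L αp)) ∧
      spectrum ℂ (αp - βp ∘L Ring.inverse (δ - γm ∘L Q ∘L βp) ∘L (γp - γm ∘L Q ∘L αp)) ⊆
        ball 0 1 ∧
      spectrum ℂ (αm - (βm - αm ∘L Q ∘L βp) ∘L Ring.inverse (δ - γm ∘L Q ∘L βp) ∘L γm) ⊆
        ball 0 1 := by
  obtain ⟨Q, Γ, B, hPΓ, hMB, hQ, hΓ, hB, hD⟩ :=
    exists_realization_of_rightFactorization (δ := δ) (βm := βm) hαp hαm hM hMu hP hPu
      fun z hz => by
        have hz0 : z⁻¹ ≠ 0 := inv_ne_zero (ne_of_mem_sphere hz one_ne_zero)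
        have hres := inverse_inv_smul_one_sub hz0
          (spectrum_subset_ball_one_iff.1 hαm z⁻¹ (by simp [mem_sphere_zero_iff_norm.1 hz]))
        rw [inv_inv] at hres
        rw [← mul_def, ← h z (by simpa using hz), hres, smul_comp, comp_smul]
  have hM0 : IsUnit (M 0) := hMu 0 (by simp)
  have hP0 : IsUnit (P 0) := hPu 0 (by simp)
  have hDinv : Ring.inverse (M 0 ∘L P 0) = Ring.inverse (P 0) ∘L Ring.inverse (M 0) :=
    Ring.inverse_mul (.inl hM0)
  have hleft : Ring.inverse (M 0 ∘L P 0) ∘L M 0 ∘L Γ = Ring.inverse (P 0) ∘L Γ := by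
    rw [hDinv]
    exact congr(Ring.inverse (P 0) ∘L $(Ring.inverse_mul_cancel _ hM0) ∘L Γ)
  have hright : (B ∘L P 0) ∘L Ring.inverse (M 0 ∘L P 0) = B ∘L Ring.inverse (M 0) := by
    rw [hDinv]
    exact congr(B ∘L $(Ring.mul_inverse_cancel _ hP0) ∘L Ring.inverse (M 0))
  refine ⟨Q, ?_⟩
  rw [hD, hΓ, hB, ← comp_assoc (B ∘L P 0), ← comp_assoc (B ∘L P 0), hright, hleft]
  refine ⟨⟨hM0.mul hP0, ?_⟩, ?_, ?_⟩
  · nth_rw 1 [hQ]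
    exact congr(_ + B ∘L $(Ring.inverse_mul_cancel _ hM0) ∘L Γ).symm
  · exact spectrum_sub_comp_inverse_comp_subset_ball hαp fun z hz => hPΓ z hz ▸ hPu z hz
  · exact spectrum_sub_comp_inverse_comp_subset_ball hαm fun w hw => hMB w hw ▸ hMu w hw

end RightFactorization

/-- If `R(z)` is invertible on an open annulus containing the unit circle and `R` admits
a right canonical Wiener–Hopf factorization, then there exists a stabilizing solution of
the Riccati equation (R1). -/
theorem exists_stabilizing_solution_of_rightCanonicalWH
    (δ : U →L[ℂ] U) (γp : Xp →L[ℂ] U) (αp : Xp →L[ℂ] Xp) (βp : U →L[ℂ] Xp)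
    (γm : Xm →L[ℂ] U) (αm : Xm →L[ℂ] Xm) (βm : U →L[ℂ] Xm)
    (hαp : spectrum ℂ αp ⊆ ball (0 : ℂ) 1) (hαm : spectrum ℂ αm ⊆ ball (0 : ℂ) 1)
    (r₁ r₂ : ℝ) (hr₁ : r₁ < 1) (hr₂ : 1 < r₂)
    (hRinv : ∀ z : ℂ, r₁ < ‖z‖ → ‖z‖ < r₂ → IsUnit (Rfun δ γp αp βp γm αm βm z))
    (hWH : RightCanonicalWH (Rfun δ γp αp βp γm αm βm)) :
    ∃ Q : Xp →L[ℂ] Xm,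
      SolvesR1 δ γp αp βp γm αm βm Q ∧ StabilizingR1 δ γp αp βp γm αm βm Q := by
  obtain ⟨Vm, Vp, ⟨V, ⟨S, -, hS, hV, hVu, -⟩, hVm⟩, ⟨S', -, hS', hVp, hVpu, -⟩, hfac⟩ := hWH
  exact exists_stabilizing_solution_of_rightCanonicalWH_general δ γp αp βp γm αm βm hαp hαm
    (hV.mono hS) (fun w hw => hVu w (hS hw)) (hVp.mono hS') (fun z hz => hVpu z (hS' hz))
    fun z hz => hVm z hz.ge ▸ hfac z hz
end
end

section
/- There exists at most one stabilizing solution of the Riccati equation (R1): if Q₁, Q₂ ∈ B(X₊, X₋) are both stabilizing solutions of (R1), then Q₁ = Q₂. -/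
open Metric ContinuousLinearMap

noncomputable section

variable {U Xp Xm : Type*}
  [NormedAddCommGroup U] [InnerProductSpace ℂ U] [CompleteSpace U]
  [NormedAddCommGroup Xp] [InnerProductSpace ℂ Xp] [CompleteSpace Xp]
  [NormedAddCommGroup Xm] [InnerProductSpace ℂ Xm] [CompleteSpace Xm]

/-!
Write `L = (β₋ − α₋Q₁β₊)(δ − γ₋Q₁β₊)⁻¹` and `K = (δ − γ₋Q₂β₊)⁻¹(γ₊ − γ₋Q₂α₊)` for two solutions
`Q₁`, `Q₂`, so that `α₋°(Q₁) = α₋ − Lγ₋` and `α₊°(Q₂) = α₊ − β₊K`. For both `i`, the Riccati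
equation for `Qᵢ` turns `(α₋ − Lγ₋) Qᵢ (α₊ − β₊K)` into `Qᵢ` plus the same operator
`LδK − Lγ₊ − β₋K`. Hence `T = Q₁ − Q₂` satisfies `T = α₋°(Q₁) T α₊°(Q₂)`, so
`T = α₋°(Q₁)ⁿ T α₊°(Q₂)ⁿ` for all `n`, and by Gelfand's formula the right-hand side tends to zero.
-/

open Filter Topology
open scoped ENNReal

section SpectralRadius

theorem spectralRadius_lt_one_of_spectrum_subset_ball {𝕜 A : Type*} [NontriviallyNormedField 𝕜]
    [ProperSpace 𝕜] [NormedRing A] [NormedAlgebra 𝕜 A] [CompleteSpace A] {a : A}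
    (ha : spectrum 𝕜 a ⊆ ball 0 1) : spectralRadius 𝕜 a < 1 := by
  rcases (spectrum 𝕜 a).eq_empty_or_nonempty with hempty | hne
  · simp [spectralRadius, hempty]
  · exact_mod_cast spectrum.spectralRadius_lt_of_forall_lt_of_nonempty hne (r := 1)
      fun _ hz => by simpa [← NNReal.coe_lt_coe] using ha hz

theorem spectralRadius_ne_top {𝕜 A : Type*} [NontriviallyNormedField 𝕜] [NormedRing A]
    [NormedAlgebra 𝕜 A] [CompleteSpace A] (a : A) : spectralRadius 𝕜 a ≠ ∞ := by
  refine ne_top_of_le_ne_top ?_ (spectrum.spectralRadius_le_pow_nnnorm_pow_one_div 𝕜 a 0)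
  simp [ENNReal.mul_eq_top]

theorem tendsto_zero_of_tendsto_rpow_one_div_lt_one {u : ℕ → ℝ≥0∞} {ρ : ℝ≥0∞}
    (hu : Tendsto (fun n : ℕ => u n ^ (1 / n : ℝ)) atTop (𝓝 ρ)) (hρ : ρ < 1) :
    Tendsto u atTop (𝓝 0) := by
  obtain ⟨r, hρr, hr⟩ := exists_between hρ
  refine tendsto_of_tendsto_of_tendsto_of_le_of_le' tendsto_const_nhds
    (ENNReal.tendsto_pow_atTop_nhds_zero_of_lt_one hr) (Eventually.of_forall fun _ => zero_le) ?_
  filter_upwards [hu.eventually_lt_const hρr, eventually_gt_atTop 0] with n hn hpos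
  rw [one_div] at hn
  exact_mod_cast (ENNReal.rpow_inv_le_iff (by exact_mod_cast hpos)).1 hn.le

theorem tendsto_norm_pow_mul_norm_pow_of_spectralRadius_mul_lt_one {A B : Type*}
    [NormedRing A] [NormedAlgebra ℂ A] [CompleteSpace A]
    [NormedRing B] [NormedAlgebra ℂ B] [CompleteSpace B] {a : A} {b : B}
    (hab : spectralRadius ℂ a * spectralRadius ℂ b < 1) :
    Tendsto (fun n : ℕ => ‖a ^ n‖ * ‖b ^ n‖) atTop (𝓝 0) := by
  have hroot : Tendsto (fun n : ℕ => ((‖a ^ n‖₊ : ℝ≥0∞) * ‖b ^ n‖₊) ^ (1 / n : ℝ)) atTop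
      (𝓝 (spectralRadius ℂ a * spectralRadius ℂ b)) := by
    simp only [ENNReal.mul_rpow_of_nonneg _ _ (one_div_nonneg.2 (Nat.cast_nonneg _))]
    exact ENNReal.Tendsto.mul
      (spectrum.pow_nnnorm_pow_one_div_tendsto_nhds_spectralRadius a)
      (.inr (spectralRadius_ne_top b))
      (spectrum.pow_nnnorm_pow_one_div_tendsto_nhds_spectralRadius b)
      (.inr (spectralRadius_ne_top a))
  simpa [Function.comp_def] using (ENNReal.tendsto_toReal ENNReal.zero_ne_top).comp
    (tendsto_zero_of_tendsto_rpow_one_div_lt_one hroot hab)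

end SpectralRadius

section FixedPoint

theorem eq_pow_comp_comp_pow_of_eq_comp_comp {R E F : Type*} [Semiring R]
    [TopologicalSpace E] [AddCommMonoid E] [Module R E]
    [TopologicalSpace F] [AddCommMonoid F] [Module R F]
    {a : F →L[R] F} {b : E →L[R] E} {T : E →L[R] F} (hT : T = a ∘L T ∘L b) (n : ℕ) :
    T = (a ^ n) ∘L T ∘L (b ^ n) := by
  induction n with
  | zero => rfl
  | succ n ih =>
    calc T = (a ^ n) ∘L (a ∘L T ∘L b) ∘L (b ^ n) := by rw [← hT, ← ih]
      _ = (a ^ (n + 1)) ∘L T ∘L (b ^ (n + 1)) := by rw [pow_succ, pow_succ']; rfl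

theorem eq_zero_of_eq_comp_comp_of_spectralRadius_mul_lt_one {E F : Type*}
    [NormedAddCommGroup E] [NormedSpace ℂ E] [CompleteSpace E]
    [NormedAddCommGroup F] [NormedSpace ℂ F] [CompleteSpace F]
    {a : F →L[ℂ] F} {b : E →L[ℂ] E} {T : E →L[ℂ] F}
    (hab : spectralRadius ℂ a * spectralRadius ℂ b < 1) (hT : T = a ∘L T ∘L b) : T = 0 := by
  have hbound (n : ℕ) : ‖T‖ ≤ ‖a ^ n‖ * ‖b ^ n‖ * ‖T‖ :=
    calc ‖T‖ = ‖(a ^ n) ∘L T ∘L (b ^ n)‖ := by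
          rw [← eq_pow_comp_comp_pow_of_eq_comp_comp hT n]
      _ ≤ ‖a ^ n‖ * (‖T‖ * ‖b ^ n‖) := by
          grw [opNorm_comp_le, opNorm_comp_le]
      _ = ‖a ^ n‖ * ‖b ^ n‖ * ‖T‖ := by ring
  have hlim : Tendsto (fun n : ℕ => ‖a ^ n‖ * ‖b ^ n‖ * ‖T‖) atTop (𝓝 0) := by
    simpa using (tendsto_norm_pow_mul_norm_pow_of_spectralRadius_mul_lt_one hab).mul_const ‖T‖
  exact norm_le_zero_iff.1 (ge_of_tendsto' hlim hbound)

end FixedPoint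

section RiccatiGain

variable {R V E F : Type*} [Ring R]
  [TopologicalSpace V] [AddCommGroup V] [Module R V] [IsTopologicalAddGroup V]
  [TopologicalSpace E] [AddCommGroup E] [Module R E]
  [TopologicalSpace F] [AddCommGroup F] [Module R F] [IsTopologicalAddGroup F]

/-- `L` is a left gain for `Q`: the Riccati equation (R1) holds with `L` in place of
`(β₋ − α₋Qβ₊)(δ − γ₋Qβ₊)⁻¹`. Encoding `L` by the equation `L(δ − γ₋Qβ₊) = β₋ − α₋Qβ₊` avoids
inverting `δ − γ₋Qβ₊`. -/
structure IsRiccatiLeftGain (δ : V →L[R] V) (γp : E →L[R] V) (αp : E →L[R] E) (βp : V →L[R] E)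
    (γm : F →L[R] V) (αm : F →L[R] F) (βm : V →L[R] F) (Q : E →L[R] F) (L : V →L[R] F) :
    Prop where
  gain_eq : L ∘L (δ - γm ∘L Q ∘L βp) = βm - αm ∘L Q ∘L βp
  riccati : Q = αm ∘L Q ∘L αp + L ∘L (γp - γm ∘L Q ∘L αp)

/-- `K` is a right gain for `Q`: the Riccati equation (R1) holds with `K` in place of
`(δ − γ₋Qβ₊)⁻¹(γ₊ − γ₋Qα₊)`. Encoding `K` by the equation `(δ − γ₋Qβ₊)K = γ₊ − γ₋Qα₊` avoids
inverting `δ − γ₋Qβ₊`. -/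
structure IsRiccatiRightGain (δ : V →L[R] V) (γp : E →L[R] V) (αp : E →L[R] E) (βp : V →L[R] E)
    (γm : F →L[R] V) (αm : F →L[R] F) (βm : V →L[R] F) (Q : E →L[R] F) (K : E →L[R] V) :
    Prop where
  gain_eq : (δ - γm ∘L Q ∘L βp) ∘L K = γp - γm ∘L Q ∘L αp
  riccati : Q = αm ∘L Q ∘L αp + (βm - αm ∘L Q ∘L βp) ∘L K

variable {δ : V →L[R] V} {γp : E →L[R] V} {αp : E →L[R] E} {βp : V →L[R] E}
  {γm : F →L[R] V} {αm : F →L[R] F} {βm : V →L[R] F} {Q Q₁ Q₂ : E →L[R] F}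
  {L : V →L[R] F} {K : E →L[R] V}

theorem IsRiccatiLeftGain.closedLoop_comp_comp_state
    (h : IsRiccatiLeftGain δ γp αp βp γm αm βm Q L) :
    (αm - L ∘L γm) ∘L Q ∘L αp = Q - L ∘L γp :=
  calc (αm - L ∘L γm) ∘L Q ∘L αp
    _ = (αm ∘L Q ∘L αp + L ∘L (γp - γm ∘L Q ∘L αp)) - L ∘L γp := by
        simp only [sub_comp, comp_sub, comp_assoc]; abel
    _ = Q - L ∘L γp := by rw [← h.riccati]

theorem IsRiccatiLeftGain.closedLoop_comp_comp_input
    (h : IsRiccatiLeftGain δ γp αp βp γm αm βm Q L) :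
    (αm - L ∘L γm) ∘L Q ∘L βp = βm - L ∘L δ :=
  calc (αm - L ∘L γm) ∘L Q ∘L βp
    _ = (αm ∘L Q ∘L βp + L ∘L (δ - γm ∘L Q ∘L βp)) - L ∘L δ := by
        simp only [sub_comp, comp_sub, comp_assoc]; abel
    _ = βm - L ∘L δ := by rw [h.gain_eq, add_sub_cancel]

variable [IsTopologicalAddGroup E]

theorem IsRiccatiRightGain.state_comp_comp_closedLoop
    (h : IsRiccatiRightGain δ γp αp βp γm αm βm Q K) :
    αm ∘L Q ∘L (αp - βp ∘L K) = Q - βm ∘L K :=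
  calc αm ∘L Q ∘L (αp - βp ∘L K)
    _ = (αm ∘L Q ∘L αp + (βm - αm ∘L Q ∘L βp) ∘L K) - βm ∘L K := by
        simp only [sub_comp, comp_sub, comp_assoc]; abel
    _ = Q - βm ∘L K := by rw [← h.riccati]

theorem IsRiccatiRightGain.output_comp_comp_closedLoop
    (h : IsRiccatiRightGain δ γp αp βp γm αm βm Q K) :
    γm ∘L Q ∘L (αp - βp ∘L K) = γp - δ ∘L K :=
  calc γm ∘L Q ∘L (αp - βp ∘L K)
    _ = (γm ∘L Q ∘L αp + (δ - γm ∘L Q ∘L βp) ∘L K) - δ ∘L K := by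
        simp only [sub_comp, comp_sub, comp_assoc]; abel
    _ = γp - δ ∘L K := by rw [h.gain_eq, add_sub_cancel]

theorem IsRiccatiLeftGain.closedLoop_comp_comp_closedLoop
    (h : IsRiccatiLeftGain δ γp αp βp γm αm βm Q L) (K : E →L[R] V) :
    (αm - L ∘L γm) ∘L Q ∘L (αp - βp ∘L K) = Q + (L ∘L δ ∘L K - L ∘L γp - βm ∘L K) :=
  calc (αm - L ∘L γm) ∘L Q ∘L (αp - βp ∘L K)
    _ = (αm - L ∘L γm) ∘L Q ∘L αp - ((αm - L ∘L γm) ∘L Q ∘L βp) ∘L K := by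
        simp only [comp_sub, comp_assoc]
    _ = (Q - L ∘L γp) - (βm - L ∘L δ) ∘L K := by
        rw [h.closedLoop_comp_comp_state, h.closedLoop_comp_comp_input]
    _ = Q + (L ∘L δ ∘L K - L ∘L γp - βm ∘L K) := by
        rw [sub_comp, comp_assoc]; abel

theorem IsRiccatiRightGain.closedLoop_comp_comp_closedLoop
    (h : IsRiccatiRightGain δ γp αp βp γm αm βm Q K) (L : V →L[R] F) :
    (αm - L ∘L γm) ∘L Q ∘L (αp - βp ∘L K) = Q + (L ∘L δ ∘L K - L ∘L γp - βm ∘L K) :=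
  calc (αm - L ∘L γm) ∘L Q ∘L (αp - βp ∘L K)
    _ = αm ∘L Q ∘L (αp - βp ∘L K) - L ∘L γm ∘L Q ∘L (αp - βp ∘L K) := by
        rw [sub_comp, comp_assoc]
    _ = (Q - βm ∘L K) - L ∘L (γp - δ ∘L K) := by
        rw [h.state_comp_comp_closedLoop, h.output_comp_comp_closedLoop]
    _ = Q + (L ∘L δ ∘L K - L ∘L γp - βm ∘L K) := by
        rw [comp_sub]; abel

theorem IsRiccatiLeftGain.sub_eq_closedLoop_comp_sub_comp_closedLoop
    (h₁ : IsRiccatiLeftGain δ γp αp βp γm αm βm Q₁ L)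
    (h₂ : IsRiccatiRightGain δ γp αp βp γm αm βm Q₂ K) :
    Q₁ - Q₂ = (αm - L ∘L γm) ∘L (Q₁ - Q₂) ∘L (αp - βp ∘L K) := by
  rw [sub_comp Q₁, comp_sub, h₁.closedLoop_comp_comp_closedLoop K,
    h₂.closedLoop_comp_comp_closedLoop L, add_sub_add_right_eq_sub]

end RiccatiGain

section SolvesR1

omit [CompleteSpace U] [CompleteSpace Xp] [CompleteSpace Xm]

variable {δ : U →L[ℂ] U} {γp : Xp →L[ℂ] U} {αp : Xp →L[ℂ] Xp} {βp : U →L[ℂ] Xp}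
  {γm : Xm →L[ℂ] U} {αm : Xm →L[ℂ] Xm} {βm : U →L[ℂ] Xm} {Q : Xp →L[ℂ] Xm}

theorem SolvesR1.isRiccatiLeftGain (h : SolvesR1 δ γp αp βp γm αm βm Q) :
    IsRiccatiLeftGain δ γp αp βp γm αm βm Q
      ((βm - (αm ∘L Q) ∘L βp) ∘L Ring.inverse (δ - (γm ∘L Q) ∘L βp)) where
  gain_eq := congrArg ((βm - (αm ∘L Q) ∘L βp) ∘L ·) (Ring.inverse_mul_cancel _ h.1)
  riccati := h.2

theorem SolvesR1.isRiccatiRightGain (h : SolvesR1 δ γp αp βp γm αm βm Q) :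
    IsRiccatiRightGain δ γp αp βp γm αm βm Q
      (Ring.inverse (δ - (γm ∘L Q) ∘L βp) ∘L (γp - (γm ∘L Q) ∘L αp)) where
  gain_eq := congrArg (· ∘L (γp - (γm ∘L Q) ∘L αp)) (Ring.mul_inverse_cancel _ h.1)
  riccati := h.2

end SolvesR1

theorem stabilizing_solution_unique_general {V E F : Type*}
    [TopologicalSpace V] [AddCommGroup V] [Module ℂ V] [IsTopologicalAddGroup V]
    [NormedAddCommGroup E] [NormedSpace ℂ E] [CompleteSpace E]
    [NormedAddCommGroup F] [NormedSpace ℂ F] [CompleteSpace F]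
    {δ : V →L[ℂ] V} {γp : E →L[ℂ] V} {αp : E →L[ℂ] E} {βp : V →L[ℂ] E}
    {γm : F →L[ℂ] V} {αm : F →L[ℂ] F} {βm : V →L[ℂ] F} {Q₁ Q₂ : E →L[ℂ] F}
    {L : V →L[ℂ] F} {K : E →L[ℂ] V}
    (h₁ : IsRiccatiLeftGain δ γp αp βp γm αm βm Q₁ L)
    (h₂ : IsRiccatiRightGain δ γp αp βp γm αm βm Q₂ K)
    (hr : spectralRadius ℂ (αm - L ∘L γm) * spectralRadius ℂ (αp - βp ∘L K) < 1) :
    Q₁ = Q₂ :=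
  sub_eq_zero.1 <| eq_zero_of_eq_comp_comp_of_spectralRadius_mul_lt_one hr <|
    h₁.sub_eq_closedLoop_comp_sub_comp_closedLoop h₂

/-- There is at most one stabilizing solution of the Riccati equation (R1). -/
theorem stabilizing_solution_unique
    (δ : U →L[ℂ] U) (γp : Xp →L[ℂ] U) (αp : Xp →L[ℂ] Xp) (βp : U →L[ℂ] Xp)
    (γm : Xm →L[ℂ] U) (αm : Xm →L[ℂ] Xm) (βm : U →L[ℂ] Xm)
    (hαp : spectrum ℂ αp ⊆ ball (0 : ℂ) 1) (hαm : spectrum ℂ αm ⊆ ball (0 : ℂ) 1)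
    (Q₁ Q₂ : Xp →L[ℂ] Xm)
    (h₁ : SolvesR1 δ γp αp βp γm αm βm Q₁) (h₁s : StabilizingR1 δ γp αp βp γm αm βm Q₁)
    (h₂ : SolvesR1 δ γp αp βp γm αm βm Q₂) (h₂s : StabilizingR1 δ γp αp βp γm αm βm Q₂) :
    Q₁ = Q₂ :=
  stabilizing_solution_unique_general h₁.isRiccatiLeftGain h₂.isRiccatiRightGain <|
    mul_lt_one_of_lt_of_le (spectralRadius_lt_one_of_spectrum_subset_ball h₁s.2)
      (spectralRadius_lt_one_of_spectrum_subset_ball h₂s.1).le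
end
end

section
/- Assume α₋ is invertible. If there exists a Q ∈ B(X₊, X₋) such that both δ − γ₋Qβ₊ and α₋° := α₋ − (β₋ − α₋Qβ₊)(δ − γ₋Qβ₊)⁻¹γ₋ are invertible, then R(0) = δ − γ₋α₋⁻¹β₋ is invertible. -/
open Metric ContinuousLinearMap

noncomputable section

variable {U Xp Xm : Type*}
  [NormedAddCommGroup U] [InnerProductSpace ℂ U] [CompleteSpace U]
  [NormedAddCommGroup Xp] [InnerProductSpace ℂ Xp] [CompleteSpace Xp]
  [NormedAddCommGroup Xm] [InnerProductSpace ℂ Xm] [CompleteSpace Xm]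

/-! `R(0)` is the Schur complement of `α₋` in the block operator `[α₋ β₋; γ₋ δ]`. Subtracting the
first block column, multiplied by `Qβ₊`, from the second one replaces `β₋` by `β₋ − α₋Qβ₊` and `δ`
by `δ − γ₋Qβ₊` without changing this Schur complement. In the new block operator, `α₋°` is the
Schur complement of the other diagonal entry, and when both diagonal entries are invertible, their
Schur complements are invertible simultaneously. -/

section SchurComplement

variable {R V W : Type*} [Ring R]
  [AddCommGroup V] [TopologicalSpace V] [IsTopologicalAddGroup V] [Module R V]
  [AddCommGroup W] [TopologicalSpace W] [IsTopologicalAddGroup W] [Module R W]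

theorem isUnit_one_sub_comp_of_isUnit_one_sub_comp {S : V →L[R] W} {T : W →L[R] V}
    (h : IsUnit (1 - S ∘L T)) : IsUnit (1 - T ∘L S) := by
  obtain ⟨E, hright, hleft⟩ := isUnit_iff_exists.1 h
  have hE : E - S ∘L T ∘L E = 1 := by
    simpa only [sub_mul, one_mul, mul_def, comp_assoc] using hright
  have hE' : E - E ∘L S ∘L T = 1 := by
    simpa only [mul_sub, mul_one, mul_def] using hleft
  -- The inverse comes from formal Neumann series: if `E = ∑ (ST)ⁿ`, then `∑ (TS)ⁿ = 1 + TES`.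
  refine isUnit_iff_exists.2 ⟨1 + T ∘L E ∘L S, ?_, ?_⟩
  · calc (1 - T ∘L S) * (1 + T ∘L E ∘L S)
        = 1 - T ∘L S + T ∘L (E - S ∘L T ∘L E) ∘L S := by
          simp only [mul_def, one_def, comp_add, comp_sub, sub_comp, comp_id, id_comp, comp_assoc]
      _ = 1 := by simp only [hE, one_def, id_comp, sub_add_cancel]
  · calc (1 + T ∘L E ∘L S) * (1 - T ∘L S)
        = 1 - T ∘L S + T ∘L (E - E ∘L S ∘L T) ∘L S := by
          simp only [mul_def, one_def, add_comp, comp_sub, sub_comp, comp_id, id_comp, comp_assoc]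
          abel
      _ = 1 := by simp only [hE', one_def, id_comp, sub_add_cancel]

theorem isUnit_one_sub_comp_comm {S : V →L[R] W} {T : W →L[R] V} :
    IsUnit (1 - S ∘L T) ↔ IsUnit (1 - T ∘L S) :=
  ⟨isUnit_one_sub_comp_of_isUnit_one_sub_comp, isUnit_one_sub_comp_of_isUnit_one_sub_comp⟩

/-- The Schur complement `D − C A⁻¹ B` of `A` in the block operator `[A B; C D]`. It is meaningful
for invertible `A` only: otherwise `Ring.inverse A = 0` and the value is `D`. -/
def schurComplement (A : W →L[R] W) (B : V →L[R] W) (C : W →L[R] V) (D : V →L[R] V) :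
    V →L[R] V :=
  D - (C ∘L Ring.inverse A) ∘L B

variable {A : W →L[R] W} {B : V →L[R] W} {C : W →L[R] V} {D : V →L[R] V}

theorem schurComplement_sub_comp (hA : IsUnit A) (K : V →L[R] W) :
    schurComplement A (B - A ∘L K) C (D - C ∘L K) = schurComplement A B C D := by
  have hCK : (C ∘L Ring.inverse A) ∘L A ∘L K = C ∘L K := by
    rw [comp_assoc, ← comp_assoc (Ring.inverse A), ← mul_def, Ring.inverse_mul_cancel A hA,
      one_def, id_comp]
  simp only [schurComplement, comp_sub, hCK]
  abel

theorem isUnit_schurComplement_comm (hA : IsUnit A) (hD : IsUnit D) :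
    IsUnit (schurComplement A B C D) ↔ IsUnit (schurComplement D C B A) := by
  have hfactorD : schurComplement A B C D =
      (1 - C ∘L (Ring.inverse A ∘L B ∘L Ring.inverse D)) * D := by
    simp only [schurComplement, sub_mul, one_mul, mul_def, comp_assoc]
    rw [← mul_def, Ring.inverse_mul_cancel D hD, one_def, comp_id]
  have hfactorA : schurComplement D C B A =
      A * (1 - (Ring.inverse A ∘L B ∘L Ring.inverse D) ∘L C) := by
    simp only [schurComplement, mul_sub, mul_one, mul_def, comp_assoc]
    rw [← comp_assoc A, ← mul_def A, Ring.mul_inverse_cancel A hA, one_def, id_comp]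
  rw [hfactorD, hfactorA, hD.mul_right_iff, hA.mul_left_iff, isUnit_one_sub_comp_comm]

theorem R0_invertible_of_exists_alphaMcirc_invertible_general
    (hA : IsUnit A) (K : V →L[R] W) (hD : IsUnit (D - C ∘L K)) :
    IsUnit (D - (C ∘L Ring.inverse A) ∘L B) ↔
      IsUnit (A - ((B - A ∘L K) ∘L Ring.inverse (D - C ∘L K)) ∘L C) := by
  change IsUnit (schurComplement A B C D) ↔
    IsUnit (schurComplement (D - C ∘L K) C (B - A ∘L K) A)
  rw [← schurComplement_sub_comp hA K, isUnit_schurComplement_comm hA hD]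

end SchurComplement

/-- If `α₋` is invertible and there exists a `Q` such that both `δ − γ₋Qβ₊` and
`α₋° = α₋ − (β₋ − α₋Qβ₊)(δ − γ₋Qβ₊)⁻¹γ₋` are invertible, then
`R(0) = δ − γ₋α₋⁻¹β₋` is invertible. -/
theorem R0_invertible_of_exists_alphaMcirc_invertible
    (δ : U →L[ℂ] U) (γp : Xp →L[ℂ] U) (αp : Xp →L[ℂ] Xp) (βp : U →L[ℂ] Xp)
    (γm : Xm →L[ℂ] U) (αm : Xm →L[ℂ] Xm) (βm : U →L[ℂ] Xm)
    (hαp : spectrum ℂ αp ⊆ ball (0 : ℂ) 1) (hαm : spectrum ℂ αm ⊆ ball (0 : ℂ) 1)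
    (hαmUnit : IsUnit αm)
    (hex : ∃ Q : Xp →L[ℂ] Xm, IsUnit (δ - (γm ∘L Q) ∘L βp) ∧
      IsUnit (αm - ((βm - (αm ∘L Q) ∘L βp) ∘L Ring.inverse (δ - (γm ∘L Q) ∘L βp)) ∘L γm)) :
    IsUnit (δ - (γm ∘L Ring.inverse αm) ∘L βm) := by
  obtain ⟨Q, hδ, hα⟩ := hex
  exact (R0_invertible_of_exists_alphaMcirc_invertible_general hαmUnit (Q ∘L βp) hδ).2 hα
end
end
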